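/- arXiv:2205.06559 — 2 statements merged into one kernel-verified Lean document; each statement's English description precedes it below -/
import Mathlib

section
/- Let F be a field of characteristic 3 and let C be the split Cayley algebra over F. There is a unique algebra automorphism σ of C with σ(u1) = u1, σ(u2) = u2 and σ(u3) = u3 + v3 − e1 + e2, and it satisfies: σ³ = id, σ ≠ id, (σ − id)² ≠ 0, and σ preserves the norm n. Setting δ = σ − id, one has δ(v1) = u2, δ(v2) = −u1, and C decomposes as the direct sum of A₀ = F·1 (1 = e1+e2), A₁ = span{v1,v2}, δ(A₁) = span{u1,u2}, and A₂ = span{u3, v3, e1−e2}, where A₂ is δ-invariant. The superalgebra with even part A₀, odd part A₁, and product x•y defined by: x•y = proj_{A₀}(xy) for x,y ∈ A₀; x•y = proj_{A₁}(xy) for x ∈ A₀, y ∈ A₁ or x ∈ A₁, y ∈ A₀; and x•y = proj_{A₀}(x·δ(y)) for x,y ∈ A₁ (projections along the decomposition C = A₀ ⊕ A₁ ⊕ δ(A₁) ⊕ A₂), is the composition superalgebra B(1,2): 1•1 = 1, 1•vi = vi = vi•1 (i = 1,2), v1•v1 = 0 = v2•v2, v1•v2 = −1, v2•v1 = 1.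 Furthermore the bilinear form nˢ given by nˢ(1,1) = b(1,1) = 2, nˢ(vi,vj) = b(vi,δ(vj)), nˢ(A₀,A₁) = nˢ(A₁,A₀) = 0 (b the polar form of n) satisfies nˢ(v1,v2) = −1 = −nˢ(v2,v1) and nˢ(v1,v1) = 0 = nˢ(v2,v2). -/
/-!
The elements `u1, u2, u3` generate the algebra: `v1 = u2 u3`, `v2 = u3 u1`, `v3 = u1 u2`,
`e1 = -u1 v1`, `e2 = -v1 u1`.  So a multiplicative `σ` with the prescribed values on the `ui`
is forced to satisfy

  `σ e1 = e1 - v3`, `σ e2 = e2 + v3`, `σ v1 = v1 + u2`, `σ v2 = v2 - u1`, `σ v3 = v3`,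

which gives uniqueness.  Conversely the linear map with these values on the basis is
multiplicative because it is so on each of the 64 pairs of basis elements
(`map_mul_of_span`).  From the values one reads off that `δ = σ - id` maps
`v1 ↦ u2 ↦ 0`, `v2 ↦ -u1 ↦ 0` and `u3 ↦ v3 - (e1 - e2) ↦ 2 v3 ↦ 0`, so `δ³ = 0`, and in
characteristic 3 this says `σ³ = id`; in particular `σ` is bijective.  In coordinates
`a0, …, a7` with respect to `e1, e2, u1, u2, u3, v1, v2, v3` the norm is
`a0 a1 + a2 a5 + a3 a6 + a4 a7`, whose invariance under `σ` is a polynomial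
identity.

Characteristic 3 enters a second time through `e1 = -(e1 + e2) - (e1 - e2)` and
`e2 = -(e1 + e2) + (e1 - e2)`, that is, `1/2 = -1`; these give both that the four summands
span `C` and that the projection to `F·1` sends `v1 (δ v2) = e2` to `-1` and
`v2 (δ v1) = -e2` to `1`.
-/

theorem map_mul_of_span {F C : Type*} [Field F] [NonAssocRing C] [Module F C]
    [SMulCommClass F C C] [IsScalarTower F C C] (S : Set C) (hS : Submodule.span F S = ⊤)
    (σ : C →ₗ[F] C) (h : ∀ x ∈ S, ∀ y ∈ S, σ (x * y) = σ x * σ y) (x y : C) :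
    σ (x * y) = σ x * σ y := by
  have hx : x ∈ Submodule.span F S := hS ▸ Submodule.mem_top
  have hy : y ∈ Submodule.span F S := hS ▸ Submodule.mem_top
  induction hx using Submodule.span_induction with
  | zero => simp
  | add a b _ _ ha hb => simp [add_mul, ha, hb]
  | smul c a _ ha => simp [smul_mul_assoc, ha]
  | mem a ha =>
    induction hy using Submodule.span_induction with
    | zero => simp
    | add b c _ _ hb hc => simp [mul_add, hb, hc]
    | smul c b _ hb => simp [mul_smul_comm, hb]
    | mem b hb => exact h a ha b hb

/-- Sums over subsets of the index type reduce to full sums by extending a family by zero. -/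
theorem iSupIndep_of_sum_univ {F M ι : Type*} [Fintype ι] [Ring F] [AddCommGroup M] [Module F M]
    (A : ι → Submodule F M)
    (h : ∀ f : ι → M, (∀ i, f i ∈ A i) → ∑ i, f i = 0 → ∀ i, f i = 0) : iSupIndep A := by
  classical
  rw [iSupIndep_iff_finsetSum_eq_zero_imp_eq_zero]
  intro s f hf hsum i hi
  have := h (fun i => if i ∈ s then f i else 0)
    (fun i => by by_cases hi : i ∈ s <;> simp [hi, hf]) (by simpa using hsum) i
  simpa [hi] using this

/-- In the split Cayley algebra over a field of characteristic 3, there is a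
unique algebra automorphism `σ` with `σ u1 = u1`, `σ u2 = u2`,
`σ u3 = u3 + v3 - e1 + e2` (case (3)); it has order 3, `(σ - id)² ≠ 0`, preserves the
norm, satisfies `δ v1 = u2`, `δ v2 = -u1` (`δ = σ - id`), gives the direct sum
decomposition `C = A₀ ⊕ A₁ ⊕ δ(A₁) ⊕ A₂` with `A₀ = F·1`, `A₁ = span{v1,v2}`,
`δ(A₁) = span{u1,u2}`, `A₂ = span{u3,v3,e1-e2}` δ-invariant, and the recipe produces the
composition superalgebra `B(1,2)` together with its supersymmetric norm. -/
theorem split_cayley_order3_case3_gives_B12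
    {F : Type*} [Field F] [CharP F 3]
    {C : Type*} [NonAssocRing C] [Module F C] [SMulCommClass F C C] [IsScalarTower F C C]
    (e1 e2 u1 u2 u3 v1 v2 v3 : C)
    (hind : LinearIndependent F ![e1, e2, u1, u2, u3, v1, v2, v3])
    (hspan : Submodule.span F {e1, e2, u1, u2, u3, v1, v2, v3} = ⊤)
    (hone : (1 : C) = e1 + e2)
    -- multiplication table of the split Cayley algebra
    (t1 : e1 * e1 = e1) (t2 : e1 * e2 = 0) (t3 : e1 * u1 = u1) (t4 : e1 * u2 = u2)
    (t5 : e1 * u3 = u3) (t6 : e1 * v1 = 0) (t7 : e1 * v2 = 0) (t8 : e1 * v3 = 0)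
    (t9 : e2 * e1 = 0) (t10 : e2 * e2 = e2) (t11 : e2 * u1 = 0) (t12 : e2 * u2 = 0)
    (t13 : e2 * u3 = 0) (t14 : e2 * v1 = v1) (t15 : e2 * v2 = v2) (t16 : e2 * v3 = v3)
    (t17 : u1 * e1 = 0) (t18 : u1 * e2 = u1) (t19 : u1 * u1 = 0) (t20 : u1 * u2 = v3)
    (t21 : u1 * u3 = -v2) (t22 : u1 * v1 = -e1) (t23 : u1 * v2 = 0) (t24 : u1 * v3 = 0)
    (t25 : u2 * e1 = 0) (t26 : u2 * e2 = u2) (t27 : u2 * u1 = -v3) (t28 : u2 * u2 = 0)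
    (t29 : u2 * u3 = v1) (t30 : u2 * v1 = 0) (t31 : u2 * v2 = -e1) (t32 : u2 * v3 = 0)
    (t33 : u3 * e1 = 0) (t34 : u3 * e2 = u3) (t35 : u3 * u1 = v2) (t36 : u3 * u2 = -v1)
    (t37 : u3 * u3 = 0) (t38 : u3 * v1 = 0) (t39 : u3 * v2 = 0) (t40 : u3 * v3 = -e1)
    (t41 : v1 * e1 = v1) (t42 : v1 * e2 = 0) (t43 : v1 * u1 = -e2) (t44 : v1 * u2 = 0)
    (t45 : v1 * u3 = 0) (t46 : v1 * v1 = 0) (t47 : v1 * v2 = u3) (t48 : v1 * v3 = -u2)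
    (t49 : v2 * e1 = v2) (t50 : v2 * e2 = 0) (t51 : v2 * u1 = 0) (t52 : v2 * u2 = -e2)
    (t53 : v2 * u3 = 0) (t54 : v2 * v1 = -u3) (t55 : v2 * v2 = 0) (t56 : v2 * v3 = u1)
    (t57 : v3 * e1 = v3) (t58 : v3 * e2 = 0) (t59 : v3 * u1 = 0) (t60 : v3 * u2 = 0)
    (t61 : v3 * u3 = -e2) (t62 : v3 * v1 = u2) (t63 : v3 * v2 = -u1) (t64 : v3 * v3 = 0)
    -- the norm: a quadratic form vanishing on the basis, with hyperbolic polar form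
    (n : QuadraticForm F C)
    (n1 : n e1 = 0) (n2 : n e2 = 0) (n3 : n u1 = 0) (n4 : n u2 = 0) (n5 : n u3 = 0)
    (n6 : n v1 = 0) (n7 : n v2 = 0) (n8 : n v3 = 0)
    (b1 : QuadraticMap.polar n e1 e2 = 1)
    (b2 : QuadraticMap.polar n u1 v1 = 1)
    (b3 : QuadraticMap.polar n u2 v2 = 1)
    (b4 : QuadraticMap.polar n u3 v3 = 1)
    (z1 : QuadraticMap.polar n e1 u1 = 0) (z2 : QuadraticMap.polar n e1 u2 = 0)
    (z3 : QuadraticMap.polar n e1 u3 = 0) (z4 : QuadraticMap.polar n e1 v1 = 0)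
    (z5 : QuadraticMap.polar n e1 v2 = 0) (z6 : QuadraticMap.polar n e1 v3 = 0)
    (z7 : QuadraticMap.polar n e2 u1 = 0) (z8 : QuadraticMap.polar n e2 u2 = 0)
    (z9 : QuadraticMap.polar n e2 u3 = 0) (z10 : QuadraticMap.polar n e2 v1 = 0)
    (z11 : QuadraticMap.polar n e2 v2 = 0) (z12 : QuadraticMap.polar n e2 v3 = 0)
    (z13 : QuadraticMap.polar n u1 u2 = 0) (z14 : QuadraticMap.polar n u1 u3 = 0)
    (z15 : QuadraticMap.polar n u2 u3 = 0) (z16 : QuadraticMap.polar n v1 v2 = 0)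
    (z17 : QuadraticMap.polar n v1 v3 = 0) (z18 : QuadraticMap.polar n v2 v3 = 0)
    (z19 : QuadraticMap.polar n u1 v2 = 0) (z20 : QuadraticMap.polar n u1 v3 = 0)
    (z21 : QuadraticMap.polar n u2 v1 = 0) (z22 : QuadraticMap.polar n u2 v3 = 0)
    (z23 : QuadraticMap.polar n u3 v1 = 0) (z24 : QuadraticMap.polar n u3 v2 = 0) :
    -- existence and uniqueness of the automorphism
    (∃! σ : C →ₗ[F] C,
      (∀ x y : C, σ (x * y) = σ x * σ y) ∧ Function.Bijective σ ∧
      σ u1 = u1 ∧ σ u2 = u2 ∧ σ u3 = u3 + v3 - e1 + e2) ∧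
    -- its properties
    (∀ σ : C →ₗ[F] C,
      (∀ x y : C, σ (x * y) = σ x * σ y) → Function.Bijective σ →
      σ u1 = u1 → σ u2 = u2 → σ u3 = u3 + v3 - e1 + e2 →
      ∀ δ : C →ₗ[F] C, (∀ x : C, δ x = σ x - x) →
      (σ ∘ₗ σ ∘ₗ σ = LinearMap.id ∧
       σ ≠ LinearMap.id ∧
       δ ∘ₗ δ ≠ 0 ∧
       (∀ x : C, n (σ x) = n x) ∧
       δ v1 = u2 ∧ δ v2 = -u1 ∧
       (Submodule.span F {v1, v2}).map δ = Submodule.span F {u1, u2} ∧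
       (Submodule.span F {u3, v3, e1 - e2}).map δ ≤ Submodule.span F {u3, v3, e1 - e2} ∧
       DirectSum.IsInternal
         ![Submodule.span F {e1 + e2}, Submodule.span F {v1, v2},
           (Submodule.span F {v1, v2}).map δ, Submodule.span F {u3, v3, e1 - e2}] ∧
       -- the recipe superalgebra is B(1,2)
       (∀ p q : C →ₗ[F] C,
         (∀ x ∈ Submodule.span F {e1 + e2}, p x = x) →
         (∀ x ∈ Submodule.span F {v1, v2} ⊔ (Submodule.span F {v1, v2}).map δ ⊔
             Submodule.span F {u3, v3, e1 - e2}, p x = 0) →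
         (∀ x ∈ Submodule.span F {v1, v2}, q x = x) →
         (∀ x ∈ Submodule.span F {e1 + e2} ⊔ (Submodule.span F {v1, v2}).map δ ⊔
             Submodule.span F {u3, v3, e1 - e2}, q x = 0) →
         (p ((e1 + e2) * (e1 + e2)) = e1 + e2 ∧
          q ((e1 + e2) * v1) = v1 ∧ q (v1 * (e1 + e2)) = v1 ∧
          q ((e1 + e2) * v2) = v2 ∧ q (v2 * (e1 + e2)) = v2 ∧
          p (v1 * δ v1) = 0 ∧ p (v2 * δ v2) = 0 ∧
          p (v1 * δ v2) = -(e1 + e2) ∧ p (v2 * δ v1) = e1 + e2)) ∧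
       -- the super norm
       QuadraticMap.polar n (e1 + e2) (e1 + e2) = 2 ∧
       QuadraticMap.polar n v1 (δ v2) = -1 ∧
       QuadraticMap.polar n v2 (δ v1) = 1 ∧
       QuadraticMap.polar n v1 (δ v1) = 0 ∧
       QuadraticMap.polar n v2 (δ v2) = 0)) := by
  have h3 : (3 : F) = 0 := by exact_mod_cast CharP.cast_eq_zero F 3
  have hcoord : ∀ x : C, ∃ a0 a1 a2 a3 a4 a5 a6 a7 : F,
      x = a0 • e1 + a1 • e2 + a2 • u1 + a3 • u2 + a4 • u3 + a5 • v1 + a6 • v2 + a7 • v3 := by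
    intro x
    have hx : x ∈ Submodule.span F {e1, e2, u1, u2, u3, v1, v2, v3} :=
      hspan ▸ Submodule.mem_top
    simp only [Submodule.mem_span_insert, Submodule.mem_span_singleton] at hx
    obtain ⟨a0, _, ⟨a1, _, ⟨a2, _, ⟨a3, _, ⟨a4, _, ⟨a5, _, ⟨a6, _, ⟨a7, rfl⟩, rfl⟩, rfl⟩, rfl⟩,
      rfl⟩, rfl⟩, rfl⟩, rfl⟩ := hx
    exact ⟨a0, a1, a2, a3, a4, a5, a6, a7, by abel⟩
  have hzero : ∀ a0 a1 a2 a3 a4 a5 a6 a7 : F,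
      a0 • e1 + a1 • e2 + a2 • u1 + a3 • u2 + a4 • u3 + a5 • v1 + a6 • v2 + a7 • v3 = 0 →
      a0 = 0 ∧ a1 = 0 ∧ a2 = 0 ∧ a3 = 0 ∧ a4 = 0 ∧ a5 = 0 ∧ a6 = 0 ∧ a7 = 0 := by
    intro a0 a1 a2 a3 a4 a5 a6 a7 h
    have := Fintype.linearIndependent_iff.1 hind ![a0, a1, a2, a3, a4, a5, a6, a7]
      (by simpa [Fin.sum_univ_succ, add_assoc] using h)
    exact ⟨this 0, this 1, this 2, this 3, this 4, this 5, this 6, this 7⟩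
  have hv3 : v3 ≠ 0 := hind.ne_zero 7
  have hext : ∀ f g : C →ₗ[F] C, f e1 = g e1 → f e2 = g e2 → f u1 = g u1 → f u2 = g u2 →
      f u3 = g u3 → f v1 = g v1 → f v2 = g v2 → f v3 = g v3 → f = g := by
    intro f g h1 h2 h3 h4 h5 h6 h7 h8
    refine LinearMap.ext_on hspan ?_
    rintro x (rfl | rfl | rfl | rfl | rfl | rfl | rfl | rfl) <;> assumption
  -- Scalars cannot be normalised modulo 3 by `module`, so the relation `3 = 0` is kept in `C`.
  have h3C : ∀ x : C, (3 : F) • x = 0 := fun x => by rw [h3, zero_smul]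
  -- The remaining values of `σ` are forced.
  have hval : ∀ σ : C →ₗ[F] C, (∀ x y : C, σ (x * y) = σ x * σ y) →
      σ u1 = u1 → σ u2 = u2 → σ u3 = u3 + v3 - e1 + e2 →
      σ e1 = e1 - v3 ∧ σ e2 = e2 + v3 ∧ σ v1 = v1 + u2 ∧ σ v2 = v2 - u1 ∧ σ v3 = v3 := by
    intro σ hm s1 s2 s3
    have w1 : σ v1 = v1 + u2 := by
      have := hm u2 u3
      rw [t29, s2, s3] at this
      simp [this, mul_add, mul_sub, t29, t32, t25, t26]
    have w2 : σ v2 = v2 - u1 := by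
      have := hm u3 u1
      rw [t35, s1, s3] at this
      simp [this, add_mul, sub_mul, t35, t59, t3, t11]
    have w3 : σ v3 = v3 := by
      have := hm u1 u2
      rwa [t20, s1, s2, t20] at this
    refine ⟨?_, ?_, w1, w2, w3⟩
    · have := hm u1 v1
      rw [t22, s1, w1, mul_add, t22, t20, map_neg] at this
      rw [← neg_inj, this]; abel
    · have := hm v1 u1
      rw [t43, s1, w1, add_mul, t43, t27, map_neg] at this
      rw [← neg_inj, this]; abel
  have hcube : ∀ σ : C →ₗ[F] C, (∀ x y : C, σ (x * y) = σ x * σ y) →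
      σ u1 = u1 → σ u2 = u2 → σ u3 = u3 + v3 - e1 + e2 →
      σ ∘ₗ σ ∘ₗ σ = LinearMap.id := by
    intro σ hm s1 s2 s3
    obtain ⟨c1, c2, w1, w2, w3⟩ := hval σ hm s1 s2 s3
    apply hext <;>
      simp only [LinearMap.comp_apply, LinearMap.id_apply, map_add, map_sub,
        s1, s2, s3, c1, c2, w1, w2, w3]
    · linear_combination (norm := module) -(h3C v3)
    · linear_combination (norm := module) (h3C v3)
    · linear_combination (norm := module) (h3C e2) - (h3C e1) + (3 : F) • (h3C v3)
    · linear_combination (norm := module) (h3C u2)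
    · linear_combination (norm := module) -(h3C u1)
  have hnorm : ∀ a0 a1 a2 a3 a4 a5 a6 a7 : F,
      n (a0 • e1 + a1 • e2 + a2 • u1 + a3 • u2 + a4 • u3 + a5 • v1 + a6 • v2 + a7 • v3)
        = a0 * a1 + a2 * a5 + a3 * a6 + a4 * a7 := by
    intro a0 a1 a2 a3 a4 a5 a6 a7
    simp only [QuadraticMap.map_add n, QuadraticMap.map_smul, QuadraticMap.polar_add_left,
      QuadraticMap.polar_smul_left, QuadraticMap.polar_smul_right, smul_eq_mul,
      n1, n2, n3, n4, n5, n6, n7, n8, b1, b2, b3, b4, z1, z2, z3, z4, z5, z6, z7, z8, z9, z10,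
      z11, z12, z13, z14, z15, z16, z17, z18, z19, z20, z21, z22, z23, z24]
    ring
  refine ⟨?_, ?_⟩
  · let B := Module.Basis.mk hind (by
      rw [← hspan]; refine Submodule.span_mono ?_
      rintro x (rfl | rfl | rfl | rfl | rfl | rfl | rfl | rfl)
      exacts [⟨0, rfl⟩, ⟨1, rfl⟩, ⟨2, rfl⟩, ⟨3, rfl⟩, ⟨4, rfl⟩, ⟨5, rfl⟩, ⟨6, rfl⟩, ⟨7, rfl⟩])
    let σ : C →ₗ[F] C := B.constr F
      ![e1 - v3, e2 + v3, u1, u2, u3 + v3 - e1 + e2, v1 + u2, v2 - u1, v3]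
    have hB : ∀ i, B i = ![e1, e2, u1, u2, u3, v1, v2, v3] i := fun i => by simp [B]
    have hσ : ∀ i, σ (![e1, e2, u1, u2, u3, v1, v2, v3] i) =
        ![e1 - v3, e2 + v3, u1, u2, u3 + v3 - e1 + e2, v1 + u2, v2 - u1, v3] i := fun i => by
      rw [← hB, Module.Basis.constr_basis]
    have c1 : σ e1 = e1 - v3 := hσ 0
    have c2 : σ e2 = e2 + v3 := hσ 1
    have s1 : σ u1 = u1 := hσ 2
    have s2 : σ u2 = u2 := hσ 3
    have s3 : σ u3 = u3 + v3 - e1 + e2 := hσ 4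
    have w1 : σ v1 = v1 + u2 := hσ 5
    have w2 : σ v2 = v2 - u1 := hσ 6
    have w3 : σ v3 = v3 := hσ 7
    clear_value σ
    have hm : ∀ x y : C, σ (x * y) = σ x * σ y := by
      refine map_mul_of_span _ hspan σ ?_
      simp only [Set.mem_insert_iff, Set.mem_singleton_iff, forall_eq_or_imp, forall_eq]
      refine ⟨⟨?_, ?_, ?_, ?_, ?_, ?_, ?_, ?_⟩, ⟨?_, ?_, ?_, ?_, ?_, ?_, ?_, ?_⟩,
        ⟨?_, ?_, ?_, ?_, ?_, ?_, ?_, ?_⟩, ⟨?_, ?_, ?_, ?_, ?_, ?_, ?_, ?_⟩,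
        ⟨?_, ?_, ?_, ?_, ?_, ?_, ?_, ?_⟩, ⟨?_, ?_, ?_, ?_, ?_, ?_, ?_, ?_⟩,
        ⟨?_, ?_, ?_, ?_, ?_, ?_, ?_, ?_⟩, ⟨?_, ?_, ?_, ?_, ?_, ?_, ?_, ?_⟩⟩ <;>
      simp only [c1, c2, s1, s2, s3, w1, w2, w3, map_neg, map_zero, mul_add, add_mul, mul_sub,
        sub_mul,
        t1, t2, t3, t4, t5, t6, t7, t8, t9, t10, t11, t12, t13, t14, t15, t16,
        t17, t18, t19, t20, t21, t22, t23, t24, t25, t26, t27, t28, t29, t30, t31, t32,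
        t33, t34, t35, t36, t37, t38, t39, t40, t41, t42, t43, t44, t45, t46, t47, t48,
        t49, t50, t51, t52, t53, t54, t55, t56, t57, t58, t59, t60, t61, t62, t63, t64] <;> abel
    refine ⟨σ, ⟨hm, ?_, s1, s2, s3⟩, ?_⟩
    -- `σ ∘ σ` is a two-sided inverse of `σ`.
    · have h := fun x => LinearMap.congr_fun (hcube σ hm s1 s2 s3) x
      exact Function.bijective_iff_has_inverse.2 ⟨fun x => σ (σ x), h, h⟩
    · rintro τ ⟨hm', -, s1', s2', s3'⟩
      obtain ⟨c1', c2', w1', w2', w3'⟩ := hval τ hm' s1' s2' s3'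
      apply hext <;> simp only [*]
  · intro σ hm _ s1 s2 s3 δ hδ
    obtain ⟨c1, c2, w1, w2, w3⟩ := hval σ hm s1 s2 s3
    have dv1 : δ v1 = u2 := by rw [hδ, w1]; abel
    have dv2 : δ v2 = -u1 := by rw [hδ, w2]; abel
    have dv3 : δ v3 = 0 := by rw [hδ, w3]; abel
    have du3 : δ u3 = v3 - (e1 - e2) := by rw [hδ, s3]; abel
    have dw : δ (e1 - e2) = -(2 : F) • v3 := by rw [hδ, map_sub, c1, c2]; module
    have hmap : (Submodule.span F {v1, v2}).map δ = Submodule.span F {u1, u2} := by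
      rw [Submodule.map_span, Set.image_pair, dv1, dv2]
      apply le_antisymm <;> rw [Submodule.span_le, Set.pair_subset_iff] <;>
        simp only [SetLike.mem_coe, Submodule.mem_span_pair]
      · exact ⟨⟨0, 1, by simp⟩, ⟨-1, 0, by simp⟩⟩
      · exact ⟨⟨0, -1, by simp⟩, ⟨1, 0, by simp⟩⟩
    refine ⟨hcube σ hm s1 s2 s3, ?_, ?_, ?_, dv1, dv2, hmap, ?_, ?_, ?_, ?_, ?_, ?_, ?_, ?_⟩
    · intro h
      have h0 : e1 - v3 = e1 := by rw [← c1, h]; rfl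
      exact hv3 (sub_eq_self.1 h0)
    · intro h
      have h0 : δ (δ u3) = 0 := LinearMap.congr_fun h u3
      rw [du3, map_sub, dv3, dw] at h0
      -- `δ² u3 = 2 v3 = -v3`
      apply hv3
      linear_combination (norm := module) h3C v3 - h0
    · intro x
      obtain ⟨a0, a1, a2, a3, a4, a5, a6, a7, rfl⟩ := hcoord x
      have : σ (a0 • e1 + a1 • e2 + a2 • u1 + a3 • u2 + a4 • u3 + a5 • v1 + a6 • v2 + a7 • v3)
          = (a0 - a4) • e1 + (a1 + a4) • e2 + (a2 - a6) • u1 + (a3 + a5) • u2 + a4 • u3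
            + a5 • v1 + a6 • v2 + (a7 - a0 + a1 + a4) • v3 := by
        simp only [map_add, map_smul, c1, c2, s1, s2, s3, w1, w2, w3]
        module
      rw [this, hnorm, hnorm]
      ring
    · rw [Submodule.map_le_iff_le_comap, Submodule.span_le]
      rintro x (rfl | rfl | rfl) <;>
        simp only [SetLike.mem_coe, Submodule.mem_comap, du3, dv3, dw, Submodule.mem_span_triple]
      · exact ⟨0, 1, -1, by module⟩
      · exact ⟨0, 0, 0, by module⟩
      · exact ⟨0, -2, 0, by module⟩
    · rw [hmap, DirectSum.isInternal_submodule_iff_iSupIndep_and_iSup_eq_top]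
      constructor
      · refine iSupIndep_of_sum_univ _ fun f hf hsum => ?_
        obtain ⟨a, ha⟩ := Submodule.mem_span_singleton.1 (hf 0)
        obtain ⟨b1, b2, hb⟩ := Submodule.mem_span_pair.1 (hf 1)
        obtain ⟨d1, d2, hd⟩ := Submodule.mem_span_pair.1 (hf 2)
        obtain ⟨r, s, t, hr⟩ := Submodule.mem_span_triple.1 (hf 3)
        rw [Fin.sum_univ_four, ← ha, ← hb, ← hd, ← hr] at hsum
        obtain ⟨k0, k1, rfl, rfl, rfl, rfl, rfl, rfl⟩ :=
          hzero (a + t) (a - t) d1 d2 r b1 b2 s (by rw [← hsum]; module)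
        have a0 : a = 0 := by linear_combination a * h3 - k0 - k1
        have t0 : t = 0 := by linear_combination k0 - a0
        subst a0 t0
        intro i
        fin_cases i
        · simpa using ha.symm
        · simpa using hb.symm
        · simpa using hd.symm
        · simpa using hr.symm
      · rw [eq_top_iff, ← hspan, Submodule.span_le]
        have hle := le_iSup ![Submodule.span F {e1 + e2}, Submodule.span F {v1, v2},
          Submodule.span F {u1, u2}, Submodule.span F {u3, v3, e1 - e2}]
        have m1 := hle 0 (Submodule.mem_span_singleton_self (e1 + e2))
        have m2 : Submodule.span F {v1, v2} ≤ _ := hle 1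
        have m3 : Submodule.span F {u1, u2} ≤ _ := hle 2
        have m4 : Submodule.span F {u3, v3, e1 - e2} ≤ _ := hle 3
        have mw := m4 (Submodule.subset_span (by simp : e1 - e2 ∈ {u3, v3, e1 - e2}))
        rintro x (rfl | rfl | rfl | rfl | rfl | rfl | rfl | rfl)
        · have h := sub_mem (neg_mem m1) mw
          rwa [show -(x + e2) - (x - e2) = x by
            linear_combination (norm := module) -h3C x] at h
        · have h := add_mem (neg_mem m1) mw
          rwa [show -(e1 + x) + (e1 - x) = x by
            linear_combination (norm := module) -h3C x] at h
        · exact m3 (Submodule.subset_span (by simp))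
        · exact m3 (Submodule.subset_span (by simp))
        · exact m4 (Submodule.subset_span (by simp))
        · exact m2 (Submodule.subset_span (by simp))
        · exact m2 (Submodule.subset_span (by simp))
        · exact m4 (Submodule.subset_span (by simp))
    · intro p q hp hp0 hq hq0
      have p1 : p (e1 + e2) = e1 + e2 := hp _ (Submodule.mem_span_singleton_self _)
      have pw : p (e1 - e2) = 0 :=
        hp0 _ (Submodule.mem_sup_right (Submodule.subset_span (by simp)))
      have q1 : q v1 = v1 := hq _ (Submodule.subset_span (by simp))
      have q2 : q v2 = v2 := hq _ (Submodule.subset_span (by simp))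
      have pe2 : p e2 = -(e1 + e2) := by
        have : e2 = -(e1 + e2) + (e1 - e2) := by
          linear_combination (norm := module) h3C e2
        rw [this, map_add, map_neg, p1, pw, add_zero, ← this]
      refine ⟨?_, ?_, ?_, ?_, ?_, ?_, ?_, ?_, ?_⟩
      · rw [← hone, one_mul, hone, p1]
      · rw [← hone, one_mul, q1]
      · rw [← hone, mul_one, q1]
      · rw [← hone, one_mul, q2]
      · rw [← hone, mul_one, q2]
      · rw [dv1, t44, map_zero]
      · rw [dv2, mul_neg, t51, neg_zero, map_zero]
      · rw [dv2, mul_neg, t43, neg_neg, pe2]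
      · rw [dv1, t52, map_neg, pe2, neg_neg]
    · rw [QuadraticMap.polar_self, QuadraticMap.map_add n, n1, n2, b1]
      simp
    · rw [dv2, QuadraticMap.polar_neg_right, QuadraticMap.polar_comm, b2]
    · rw [dv1, QuadraticMap.polar_comm, b3]
    · rw [dv1, QuadraticMap.polar_comm, z21]
    · rw [dv2, QuadraticMap.polar_neg_right, QuadraticMap.polar_comm, z19, neg_zero]
end

section
/- Let F be a field of characteristic 3, V a finite-dimensional F-vector space, b: V × V → F a symmetric nondegenerate bilinear form, and σ: V → V a linear map with σ³ = id and b(σ(x), σ(y)) = b(x,y) for all x,y. Write δ = σ − id and fix a splitting V = V₀ ⊕ V₁ ⊕ δ(V₁) ⊕ V₂ (as defined in the context). Define on the superspace W = V₀ ⊕ V₁ (even part V₀, odd part V₁) the bilinear form nˢ by nˢ(x,y) = b(x,y) for x,y ∈ V₀, nˢ(x,y) = b(x, δ(y)) for x,y ∈ V₁, and nˢ(V₀,V₁) = nˢ(V₁,V₀) = 0. Then: (a) nˢ is supersymmetric (symmetric on V₀×V₀, skew-symmetric on V₁×V₁) and nondegenerate; (b) the Lie superalgebra obtained by applying the recipe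 to the orthogonal Lie algebra so(V,b) = {f ∈ End(V) : b(f(x),y) + b(x,f(y)) = 0 for all x,y} equipped with the order-dividing-3 automorphism Ad_σ: f ↦ σ∘f∘σ⁻¹ (and any splitting of so(V,b) with respect to Ad_σ) is isomorphic, as a Lie superalgebra, to the orthosymplectic Lie superalgebra osp(W, nˢ) of all homogeneous (even or odd) endomorphisms f of W satisfying nˢ(f(x),y) + (−1)^{|f||x|} nˢ(x,f(y)) = 0 for all homogeneous x, y. -/
/-!
Write `D = ad δ` on `End V`, let `A` and `B` be the projections of `V` onto `V₀` and `V₁`, and let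
`Δ = Ad_σ - id`.  An operator `f` commuting with `δ` acts on `ker δ` and `ker δ²` and preserves
`im δ`, so compressing it to `V₀` and to `V₁` gives an even operator on `W = V₀ ⊕ V₁`, namely
`A f A + B f B`.  An operator `g` with `D² g = 0` maps `ker δ` to `ker δ²`, and maps `δ(ker δ²)` to
`ker δ + im δ`, which gives an odd operator on `W`, namely `B g A + A g δ B`: it is
`x ↦ proj (g x)` on `V₀` and `x ↦ proj (g (δ x))` on `V₁`.  These two maps are multiplicative in the
super sense (`SplitOps.even_even`, `SplitOps.even_odd`, `SplitOps.odd_even`, `SplitOps.odd_odd`),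
kill the terms discarded by the recipe (`SplitOps.even_im`, `SplitOps.odd_inv`, `SplitOps.odd_im`),
and kill nothing else (`SplitOps.exists_im_of_even`, `SplitOps.exists_inv_add_im_of_odd`).
Together with the projections of `so(V, b)` to `L₀` and `L₁` they define the isomorphism
(`RecipeData.toOsp`).

Two points use the form.  The adjoint with respect to `b` is compatible with `Δ` and induces the
superadjoint with respect to `nˢ` (`SplitOps.even_adj`, `SplitOps.odd_adj`), so `so(V, b)` is sent
into `osp(W, nˢ)`.  Moreover, since `-2 = 1`, the map `f ↦ f* - f` is a projection of `End V` onto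
`so(V, b)` commuting with `Δ`.  This brings the kernel computation and the lifting of operators on
`W` from `End V` down to `so(V, b)` (`OrthData.descend`, `OrthData.exists_even`,
`OrthData.exists_odd`).
-/

/-! ### Operators attached to a splitting -/

/-- The operators attached to a splitting `V = V₀ ⊕ V₁ ⊕ δ(V₁) ⊕ (U ⊕ δ(U) ⊕ δ²(U))`, as elements
of the ring `R = End V`: `A` and `B` are the projections onto `V₀` and `V₁`, while `q` inverts
`δ : V₁ → δ(V₁)` and `e` inverts `δ² : U → δ²(U)`, both extended by zero to the other summands.
The last parenthesis in `one` is the projection onto the free part `V₂`. -/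
structure SplitOps {R : Type*} [Ring R] (δ A B q e : R) : Prop where
  three : (3 : R) = 0
  ddd : δ * δ * δ = 0
  Ad : A * δ = 0
  dA : δ * A = 0
  Bd : B * δ = 0
  ddB : δ * δ * B = 0
  qd : q * δ = B
  AA : A * A = A
  BB : B * B = B
  AB : A * B = 0
  BA : B * A = 0
  Bq : B * q = q
  qA : q * A = 0
  one : A + B + δ * q + (δ * δ * e + δ * e * δ + e * δ * δ) = 1

namespace SplitOps

variable {R : Type*} [Ring R] {δ A B q e : R}

lemma Aq (S : SplitOps δ A B q e) : A * q = 0 := by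
  rw [← S.Bq, ← mul_assoc, S.AB, zero_mul]

lemma ddq (S : SplitOps δ A B q e) : δ * δ * q = 0 := by
  rw [← S.Bq, ← mul_assoc, S.ddB, zero_mul]

/-- An element of `ker δ` is its `V₀`-component up to an element of `im δ`. -/
lemma ker_eq (S : SplitOps δ A B q e) {x : R} (h : δ * x = 0) :
    x = A * x + δ * ((q + δ * e) * x) := by
  linear_combination (norm := noncomm_ring) -(S.one * x) + q * h - S.qd * x + (e * δ + δ * e) * h

/-- An element of `ker δ²` is the sum of its `V₀`- and `V₁`-components up to an element of
`im δ`. -/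
lemma ker2_eq (S : SplitOps δ A B q e) {x : R} (h : δ * δ * x = 0) :
    x = A * x + B * x + δ * ((q + δ * e + e * δ) * x) := by
  linear_combination (norm := noncomm_ring) -(S.one * x) + e * h

/-! Multiplicativity.  Below, `δ * f = f * δ` says that `f` is `Ad_σ`-invariant, and
`δ * δ * g + δ * g * δ + g * δ * δ = 0` says that `(ad δ)² g = 0` (recall `-2 = 1`). -/

lemma even_even (S : SplitOps δ A B q e) {f g : R} (hf : δ * f = f * δ) (hg : δ * g = g * δ) :
    A * (f * g) * A + B * (f * g) * B
      = (A * f * A + B * f * B) * (A * g * A + B * g * B) := by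
  have h1 := S.ker_eq (x := g * A)
    (by linear_combination (norm := noncomm_ring) hg * A + g * S.dA)
  have h2 := S.ker2_eq (x := g * B)
    (by linear_combination (norm := noncomm_ring) δ * hg * B + hg * δ * B + g * S.ddB)
  generalize hY : (q + δ * e) * (g * A) = Y at h1
  generalize hZ : (q + δ * e + e * δ) * (g * B) = Z at h2
  have h3 : B * f * A = 0 := by
    linear_combination (norm := noncomm_ring) -(S.qd * f * A) + q * hf * A + q * f * S.dA
  linear_combination (norm := noncomm_ring) A * f * h1 + B * f * h2 + h3 * g * B
    - A * hf * Y + S.Ad * f * Y - B * hf * Z + S.Bd * f * Z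
    - A * f * S.AA * g * A - A * f * S.AB * g * B
    - B * f * S.BA * g * A - B * f * S.BB * g * B

/-- An operator killed by `(ad δ)²` maps `δ(ker δ²)` into `ker δ + im δ`. -/
lemma quad_dB {x g : R} (hx : δ * δ * x = 0)
    (hg : δ * δ * g + δ * g * δ + g * δ * δ = 0) :
    δ * (g * δ * x + δ * g * x) = 0 := by
  linear_combination (norm := noncomm_ring) hg * x - g * hx

lemma quad_A (S : SplitOps δ A B q e) {g : R}
    (hg : δ * δ * g + δ * g * δ + g * δ * δ = 0) : δ * δ * (g * A) = 0 := by
  linear_combination (norm := noncomm_ring) hg * A - δ * g * S.dA - g * δ * S.dA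

lemma even_odd (S : SplitOps δ A B q e) {f g : R} (hf : δ * f = f * δ)
    (hg : δ * δ * g + δ * g * δ + g * δ * δ = 0) :
    B * (f * g) * A + A * (f * g) * δ * B
      = (A * f * A + B * f * B) * (B * g * A + A * g * δ * B) := by
  have h1 := S.ker2_eq (S.quad_A hg)
  have h2 := S.ker_eq (quad_dB S.ddB hg)
  generalize (q + δ * e + e * δ) * (g * A) = Y at h1
  generalize (q + δ * e) * (g * δ * B + δ * g * B) = Z at h2
  have h3 : B * f * A = 0 := by
    linear_combination (norm := noncomm_ring) -(S.qd * f * A) + q * hf * A + q * f * S.dA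
  have h4 : A * f * δ = 0 := by
    linear_combination (norm := noncomm_ring) -A * hf + S.Ad * f
  linear_combination (norm := noncomm_ring) B * f * h1 + A * f * h2 + h3 * g * A
    - B * hf * Y + S.Bd * f * Y + h4 * Z - h4 * g * B + A * f * S.Ad * g * B
    - A * f * S.AB * g * A - A * f * S.AA * g * δ * B
    - B * f * S.BB * g * A - B * f * S.BA * g * δ * B

lemma odd_even (S : SplitOps δ A B q e) {f g : R} (hf : δ * f = f * δ)
    (hg : δ * δ * g + δ * g * δ + g * δ * δ = 0) :
    B * (g * f) * A + A * (g * f) * δ * B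
      = (B * g * A + A * g * δ * B) * (A * f * A + B * f * B) := by
  have hfA : δ * (f * A) = 0 := by
    linear_combination (norm := noncomm_ring) hf * A + f * S.dA
  have h1 := S.ker_eq hfA
  have h2 := S.ker2_eq (x := f * B)
    (by linear_combination (norm := noncomm_ring) δ * hf * B + hf * δ * B + f * S.ddB)
  generalize hY : (q + δ * e) * (f * A) = Y at h1
  generalize (q + δ * e + e * δ) * (f * B) = Z at h2
  have hYd : δ * δ * Y = 0 := by
    linear_combination (norm := noncomm_ring) -(δ * h1) + hfA - S.dA * f * A
  -- `g` maps `δ(ker δ²)` into `ker δ + im δ`, which `B` kills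
  have h3 : B * g * δ * Y = 0 := by
    linear_combination (norm := noncomm_ring) q * quad_dB hYd hg - S.qd * (g * δ * Y + δ * g * Y)
      - S.Bd * g * Y
  have h4 : A * g * δ * δ * Z = 0 := by
    linear_combination (norm := noncomm_ring) A * hg * Z - S.Ad * δ * g * Z - S.Ad * g * δ * Z
  linear_combination (norm := noncomm_ring) B * g * h1 + A * g * δ * h2 + h3 + h4
    - A * g * hf * B + A * g * S.dA * f * B
    - B * g * S.AA * f * A - B * g * S.AB * f * B
    - A * g * δ * S.BA * f * A - A * g * δ * S.BB * f * B


/-- The bracket of two odd elements.  With `F`, `G` in the roles of `Δ f`, `Δ g`, the element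
`[F, g] - [f, G]` is `Ad_σ`-invariant, and its even part is the anticommutator of the odd parts
of `f` and `g`. -/
lemma odd_odd (S : SplitOps δ A B q e) {f g F G : R}
    (hf : δ * δ * f + δ * f * δ + f * δ * δ = 0)
    (hg : δ * δ * g + δ * g * δ + g * δ * δ = 0)
    (hF : F = (δ * f - f * δ) * (1 + 2 * δ + δ * δ))
    (hG : G = (δ * g - g * δ) * (1 + 2 * δ + δ * δ)) :
    A * (F * g - g * F - f * G + G * f) * A + B * (F * g - g * F - f * G + G * f) * B
      = (B * f * A + A * f * δ * B) * (B * g * A + A * g * δ * B)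
        + (B * g * A + A * g * δ * B) * (B * f * A + A * f * δ * B) := by
  have kA : ∀ {f g : R}, δ * δ * f + δ * f * δ + f * δ * δ = 0 →
      δ * δ * g + δ * g * δ + g * δ * δ = 0 → A * f * δ * g * A = A * f * δ * B * g * A := by
    intro f g hf hg
    have h1 := S.ker2_eq (S.quad_A hg)
    generalize (q + δ * e + e * δ) * (g * A) = Y at h1
    linear_combination (norm := noncomm_ring) A * f * δ * h1 + A * f * S.dA * g * A
      + A * hf * Y - S.Ad * δ * f * Y - S.Ad * f * δ * Y
  have kB : ∀ {f g : R}, δ * δ * f + δ * f * δ + f * δ * δ = 0 →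
      δ * δ * g + δ * g * δ + g * δ * δ = 0 →
      B * f * A * g * δ * B = B * f * g * δ * B + B * f * δ * g * B := by
    intro f g hf hg
    have h0 := quad_dB S.ddB hg
    have h2 := S.ker_eq h0
    generalize (q + δ * e) * (g * δ * B + δ * g * B) = Y at h2
    have hYd : δ * δ * Y = 0 := by
      linear_combination (norm := noncomm_ring) -(δ * h2) + h0 - S.dA * (g * δ * B + δ * g * B)
    have h3 : B * f * δ * Y = 0 := by
      linear_combination (norm := noncomm_ring) q * quad_dB hYd hf - S.qd * (f * δ * Y + δ * f * Y)
        - S.Bd * f * Y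
    linear_combination (norm := noncomm_ring) -(B * f * h2) - B * f * S.Ad * g * B - h3
  have FA : ∀ {f F : R}, F = (δ * f - f * δ) * (1 + 2 * δ + δ * δ) → F * A = δ * f * A := by
    rintro f F rfl
    linear_combination (norm := noncomm_ring) (δ * f - f * δ) * (2 + δ) * S.dA - f * S.dA
  have FB : ∀ {f F : R}, F = (δ * f - f * δ) * (1 + 2 * δ + δ * δ) →
      F * B = δ * f * B + 2 * (δ * f * δ * B) - f * δ * B := by
    rintro f F rfl
    linear_combination (norm := noncomm_ring) (δ * f - f * δ) * S.ddB - 2 * (f * S.ddB)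
  have AF : ∀ {f g F : R}, F = (δ * f - f * δ) * (1 + 2 * δ + δ * δ) →
      δ * δ * g + δ * g * δ + g * δ * δ = 0 → A * F * g * A = - (A * f * δ * g * A) := by
    rintro f g F rfl hg
    linear_combination (norm := noncomm_ring) S.Ad * f * (1 + 2 * δ + δ * δ) * g * A
      - A * f * (2 + δ) * S.quad_A hg
  have BF : ∀ {f F : R}, F = (δ * f - f * δ) * (1 + 2 * δ + δ * δ) →
      B * F = - (B * f * δ) - 2 * (B * f * δ * δ) := by
    rintro f F rfl
    linear_combination (norm := noncomm_ring) S.Bd * f * (1 + 2 * δ + δ * δ) - B * f * S.ddd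
  have eA : A * (F * g - g * F - f * G + G * f) * A
      = A * f * δ * B * g * A + A * g * δ * B * f * A := by
    linear_combination (norm := noncomm_ring) AF hF hg + AF hG hf - A * g * FA hF - A * f * FA hG
      - 2 * kA hf hg - 2 * kA hg hf - S.three * (A * f * δ * B * g * A + A * g * δ * B * f * A)
  have eB : B * (F * g - g * F - f * G + G * f) * B
      = B * f * A * g * δ * B + B * g * A * f * δ * B := by
    linear_combination (norm := noncomm_ring) BF hF * g * B + BF hG * f * B - B * g * FB hF
      - B * f * FB hG - kB hf hg - kB hg hf - 2 * (B * f * hg * B) - 2 * (B * g * hf * B)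
      + 2 * (B * f * g * S.ddB) + 2 * (B * g * f * S.ddB)
      - S.three * (B * f * δ * g * B + B * g * δ * f * B)
  linear_combination (norm := noncomm_ring) eA + eB
    - B * f * S.AB * g * A - B * f * S.AA * g * δ * B - A * f * δ * S.BB * g * A
    - A * f * δ * S.BA * g * δ * B
    - B * g * S.AB * f * A - B * g * S.AA * f * δ * B - A * g * δ * S.BB * f * A
    - A * g * δ * S.BA * f * δ * B

/-! The even and odd parts vanish on the negligible elements. -/

lemma even_im (S : SplitOps δ A B q e) {k : R}
    (hk : δ * δ * k + δ * k * δ + k * δ * δ = 0) :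
    A * ((δ * k - k * δ) * (1 + 2 * δ + δ * δ)) * A
      + B * ((δ * k - k * δ) * (1 + 2 * δ + δ * δ)) * B = 0 := by
  have h : B * k * δ * B = 0 := by
    linear_combination (norm := noncomm_ring) q * hk * B - S.qd * δ * k * B - S.qd * k * δ * B
      - q * k * S.ddB - S.Bd * k * B
  linear_combination (norm := noncomm_ring)
    A * (δ * k - k * δ) * (2 + δ) * S.dA - A * k * S.dA + S.Ad * k * A
    + B * (δ * k - k * δ) * S.ddB + S.Bd * k * (1 + 2 * δ) * B - h - 2 * (B * k * S.ddB)

lemma odd_inv (S : SplitOps δ A B q e) {k : R} (hk : δ * k = k * δ) :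
    B * k * A + A * k * δ * B = 0 := by
  linear_combination (norm := noncomm_ring) q * hk * A - S.qd * k * A + q * k * S.dA
    - A * hk * B + S.Ad * k * B

lemma odd_im (S : SplitOps δ A B q e) (k : R) :
    B * ((δ * k - k * δ) * (1 + 2 * δ + δ * δ)) * A
      + A * ((δ * k - k * δ) * (1 + 2 * δ + δ * δ)) * δ * B = 0 := by
  linear_combination (norm := noncomm_ring)
    B * (δ * k - k * δ) * (2 + δ) * S.dA - B * k * S.dA + S.Bd * k * A
    + A * (δ * k - k * δ) * (2 + δ) * S.ddB + S.Ad * k * δ * B - A * k * S.ddB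

/-! Conversely, the elements on which they vanish are negligible.  The free part of the module
is removed by the homotopy `e`, whose second `ad δ`-derivative is the projection onto `V₂`. -/

lemma exists_im_of_even (S : SplitOps δ A B q e) {a : R} (ha : δ * a = a * δ)
    (hA : A * a * A = 0) (hB : B * a * B = 0) : ∃ k, a = δ * k - k * δ := by
  obtain ⟨r, hr⟩ : ∃ r, r = δ * δ * e + δ * e * δ + e * δ * δ := ⟨_, rfl⟩
  have hone : A + B + δ * q + r = 1 := by rw [hr]; exact S.one
  have hp : a = a * r + r * (a * (A + B + δ * q))
      + (A + B + δ * q) * a * (A + B + δ * q) := by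
    have h : A + B + δ * q = 1 - r := eq_sub_of_add_eq hone
    rw [h]; noncomm_ring
  have hd : δ * (A + B + δ * q) = (A + B + δ * q) * δ := by
    have h : A + B + δ * q = 1 - r := eq_sub_of_add_eq hone
    rw [h, hr]
    linear_combination (norm := noncomm_ring) - S.ddd * e + e * S.ddd
  have hb : δ * (a * (A + B + δ * q)) = a * (A + B + δ * q) * δ := by
    linear_combination (norm := noncomm_ring) ha * (A + B + δ * q) + a * hd
  generalize hx : a * (A + B + δ * q) = b at hp hb
  have hcore : (A + B + δ * q) * a * (A + B + δ * q)
      = A * a * B + δ * q * a * A + δ * q * a * B := by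
    linear_combination (norm := noncomm_ring) hA + hB
      + (q * ha * A - S.qd * a * A + q * a * S.dA) + (S.Ad * a * q - A * ha * q)
      + (S.Bd * a * q - B * ha * q)
      + (δ * S.qd * a * q - δ * q * ha * q + δ * hB * q - δ * B * a * S.Bq)
  rw [hcore] at hp
  refine ⟨(δ * (a * e) - a * e * δ) + (δ * (e * b) - e * b * δ)
    + q * a * A - A * a * q - δ * q * a * q, ?_⟩
  linear_combination (norm := noncomm_ring) hp + a * hr + hr * b
    - δ * ha * e - ha * δ * e + 2 * (ha * e * δ)
    + e * δ * hb + e * hb * δ - 2 * (δ * e * hb)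
    + S.three * (a * δ * e * δ + δ * e * δ * b)
    + S.dA * a * q - A * a * S.qd + q * a * S.Ad + S.ddq * a * q - δ * q * a * S.qd

/-- An element killed by `(ad δ)²` whose odd part vanishes is invariant up to `im (ad δ)`. -/
lemma exists_inv_add_im_of_odd (S : SplitOps δ A B q e) {c : R}
    (hc : δ * δ * c + δ * c * δ + c * δ * δ = 0)
    (h1 : B * c * A = 0) (h2 : A * c * δ * B = 0) :
    ∃ l k, δ * l = l * δ ∧ c = l + (δ * k - k * δ) := by
  obtain ⟨r, hr⟩ : ∃ r, r = δ * δ * e + δ * e * δ + e * δ * δ := ⟨_, rfl⟩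
  have hone : A + B + δ * q + r = 1 := by rw [hr]; exact S.one
  have hpr : A + B + δ * q = 1 - r := eq_sub_of_add_eq hone
  have hp : c = c * r + r * (c * (A + B + δ * q))
      + (A + B + δ * q) * c * (A + B + δ * q) := by
    rw [hpr]; noncomm_ring
  have hd : δ * (A + B + δ * q) = (A + B + δ * q) * δ := by
    rw [hpr, hr]
    linear_combination (norm := noncomm_ring) - S.ddd * e + e * S.ddd
  have hb : δ * δ * (c * (A + B + δ * q)) + δ * (c * (A + B + δ * q)) * δ
      + c * (A + B + δ * q) * δ * δ = 0 := by
    linear_combination (norm := noncomm_ring) hc * (A + B + δ * q) - δ * c * hd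
      - c * δ * hd - c * hd * δ
  generalize hx : c * (A + B + δ * q) = b at hp hb
  -- `ad δ` of `D (x e) + (D x) e` is `x r` for every `x` with `D² x = 0`, where `D = ad δ`
  have hcr : ∃ k, c * r = δ * k - k * δ := by
    refine ⟨(δ * (c * e) - c * e * δ) + (δ * c - c * δ) * e, ?_⟩
    rw [hr]
    linear_combination (norm := noncomm_ring) (-2 : ℤ) • (hc * e)
      + S.three * (δ * c * δ * e + δ * c * e * δ + c * δ * δ * e)
  have hrb : ∃ k, r * b = δ * k - k * δ := by
    refine ⟨(δ * (e * b) - e * b * δ) + e * (δ * b - b * δ), ?_⟩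
    rw [hr]
    linear_combination (norm := noncomm_ring) (-2 : ℤ) • (e * hb)
      + S.three * (e * δ * δ * b + δ * e * b * δ + e * δ * b * δ)
  have hcore : (A + B + δ * q) * c * (A + B + δ * q)
      = A * c * A + A * c * B + δ * q * c * A + δ * q * c * B + B * c * B
        + δ * q * c * δ * q := by
    linear_combination (norm := noncomm_ring) h1 + h2 * q - A * c * δ * S.Bq
      + (q * hc * q - S.qd * δ * c * q - S.qd * c * δ * q - S.Bd * c * q - q * c * S.ddq)
  obtain ⟨k₁, hk₁⟩ := hcr
  obtain ⟨k₂, hk₂⟩ := hrb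
  rw [hcore, hk₁, hk₂] at hp
  -- a diagonal pair of maps on `V₁` and `δ(V₁)` is the half sum of an invariant one and of the
  -- image under `ad δ` of a map `δ(V₁) → V₁`
  obtain ⟨x, hx⟩ : ∃ x, x = -(q * c * δ * B + B * c * B) := ⟨_, rfl⟩
  obtain ⟨y, hy⟩ : ∃ y, y = B * c * B - q * c * δ * B := ⟨_, rfl⟩
  have hxB : x * B = x := by
    rw [hx]; linear_combination (norm := noncomm_ring) -(q * c * δ * S.BB) - B * c * S.BB
  have hyB : y * B = y := by
    rw [hy]; linear_combination (norm := noncomm_ring) -(q * c * δ * S.BB) + B * c * S.BB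
  have hxd : x * δ = 0 := by
    rw [hx]; linear_combination (norm := noncomm_ring) -(q * c * δ * S.Bd) - B * c * S.Bd
  have hddx : δ * δ * x = 0 := by
    rw [hx]; linear_combination (norm := noncomm_ring) -(S.ddq * c * δ * B) - S.ddB * c * B
  refine ⟨A * c * A + A * c * B + δ * q * c * A + δ * q * c * B + x + δ * x * q,
    k₁ + k₂ + y * q, ?_, ?_⟩
  · linear_combination (norm := noncomm_ring) S.dA * c * A + S.dA * c * B + S.ddq * c * A
      + S.ddq * c * B + hddx * q - A * c * S.Ad - A * c * S.Bd - δ * q * c * S.Ad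
      - δ * q * c * S.Bd - hxd - δ * x * S.qd - δ * hxB
  · have h3 : B * c * B + δ * q * c * δ * q = x - y + δ * (x + y) * q := by
      rw [hx, hy]
      linear_combination (norm := noncomm_ring) S.three * (B * c * B)
        + S.three * (δ * q * c * δ * B * q) - δ * q * c * δ * S.Bq
    linear_combination (norm := noncomm_ring) hp + h3 + y * S.qd + hyB

end SplitOps

/-! ### Splittings -/

section Splitting

variable {F M : Type*} [Field F] [AddCommGroup M] [Module F M]

/-- `S = N₀ ⊕ N₁ ⊕ δ(N₁) ⊕ U ⊕ δ(U) ⊕ δ²(U)`, in terms of elements, for an operator `δ` that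
vanishes on `N₀`, squares to zero on `N₁` and cubes to zero on `U`. -/
structure IsSplit (δ : M →ₗ[F] M) (S N₀ N₁ U : Submodule F M) : Prop where
  ker₀ : ∀ x ∈ N₀, δ x = 0
  ker₁ : ∀ x ∈ N₁, δ (δ x) = 0
  kerU : ∀ x ∈ U, δ (δ (δ x)) = 0
  uniq : ∀ a ∈ N₀, ∀ c ∈ N₁, ∀ y ∈ N₁, ∀ u ∈ U, ∀ v ∈ U, ∀ w ∈ U,
    a + c + δ y + u + δ v + δ (δ w) = 0 → a = 0 ∧ c = 0 ∧ y = 0 ∧ u = 0 ∧ v = 0 ∧ w = 0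
  ex : ∀ x ∈ S, ∃ a ∈ N₀, ∃ c ∈ N₁, ∃ y ∈ N₁, ∃ u ∈ U, ∃ v ∈ U, ∃ w ∈ U,
    x = a + c + δ y + u + δ v + δ (δ w)

lemma isSplit_of_iSupIndep (δ : M →ₗ[F] M) (S N₀ N₁ U : Submodule F M)
    (h₀ : ∀ x ∈ N₀, δ x = 0)
    (h₁inj : ∀ x ∈ N₁, δ x = 0 → x = 0)
    (h₁ker : ∀ x ∈ N₁, δ (δ x) = 0)
    (hUinj : ∀ x ∈ U, δ (δ x) = 0 → x = 0)
    (hUker : ∀ x ∈ U, δ (δ (δ x)) = 0)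
    (hind : iSupIndep ![N₀, N₁, N₁.map δ, U, U.map δ, U.map (δ ∘ₗ δ)])
    (hsup : S ≤ N₀ ⊔ N₁ ⊔ N₁.map δ ⊔ U ⊔ U.map δ ⊔ U.map (δ ∘ₗ δ)) :
    IsSplit δ S N₀ N₁ U where
  ker₀ := h₀
  ker₁ := h₁ker
  kerU := hUker
  uniq := by
    intro a ha c hc y hy u hu v hv w hw h
    have key := (iSupIndep_iff_finsetSum_eq_zero_imp_eq_zero _).1 hind Finset.univ
      ![a, c, δ y, u, δ v, δ (δ w)] (by
        intro i _
        fin_cases i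
        · exact ha
        · exact hc
        · exact Submodule.mem_map_of_mem hy
        · exact hu
        · exact Submodule.mem_map_of_mem hv
        · exact ⟨w, hw, rfl⟩)
      (by simpa [Fin.sum_univ_succ, add_assoc] using h)
    refine ⟨key 0 (Finset.mem_univ _), key 1 (Finset.mem_univ _), h₁inj y hy ?_,
      key 3 (Finset.mem_univ _), hUinj v hv ?_, hUinj w hw ?_⟩
    · exact key 2 (Finset.mem_univ _)
    · rw [show δ v = 0 from key 4 (Finset.mem_univ _), map_zero]
    · exact key 5 (Finset.mem_univ _)
  ex := by
    intro x hx
    obtain ⟨x₄, h₄, _, ⟨w, hw, rfl⟩, rfl⟩ := Submodule.mem_sup.1 (hsup hx)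
    obtain ⟨x₃, h₃, _, ⟨v, hv, rfl⟩, rfl⟩ := Submodule.mem_sup.1 h₄
    obtain ⟨x₂, h₂, u, hu, rfl⟩ := Submodule.mem_sup.1 h₃
    obtain ⟨x₁, h₁, _, ⟨y, hy, rfl⟩, rfl⟩ := Submodule.mem_sup.1 h₂
    obtain ⟨a, ha, c, hc, rfl⟩ := Submodule.mem_sup.1 h₁
    exact ⟨a, ha, c, hc, y, hy, u, hu, v, hv, w, hw, rfl⟩

lemma forall_mem_sup_eq_zero {N₁ N₂ N₃ N₄ N₅ : Submodule F M} {f : M →ₗ[F] M}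
    (h : ∀ x ∈ N₁ ⊔ N₂ ⊔ N₃ ⊔ N₄ ⊔ N₅, f x = 0) :
    (∀ x ∈ N₁, f x = 0) ∧ (∀ x ∈ N₂, f x = 0) ∧ (∀ x ∈ N₃, f x = 0) ∧ (∀ x ∈ N₄, f x = 0) ∧
      (∀ x ∈ N₅, f x = 0) := by
  have h' : N₁ ⊔ N₂ ⊔ N₃ ⊔ N₄ ⊔ N₅ ≤ LinearMap.ker f := fun x hx => h x hx
  simp only [sup_le_iff] at h'
  obtain ⟨⟨⟨⟨h1, h2⟩, h3⟩, h4⟩, h5⟩ := h'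
  exact ⟨h1, h2, h3, h4, h5⟩

lemma proj_zero {δ : M →ₗ[F] M} {N₀ N₁ U : Submodule F M} {p₀ : M →ₗ[F] M}
    (hp₀ : ∀ x ∈ N₀, p₀ x = x)
    (hp₀0 : ∀ x ∈ N₁ ⊔ N₁.map δ ⊔ U ⊔ U.map δ ⊔ U.map (δ ∘ₗ δ), p₀ x = 0) :
    ∀ a ∈ N₀, ∀ c ∈ N₁, ∀ y ∈ N₁, ∀ u ∈ U, ∀ v ∈ U, ∀ w ∈ U,
      p₀ (a + c + δ y + u + δ v + δ (δ w)) = a := by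
  intro a ha c hc y hy u hu v hv w hw
  obtain ⟨h1, h2, h3, h4, h5⟩ := forall_mem_sup_eq_zero hp₀0
  simp only [map_add]
  rw [hp₀ a ha, h1 c hc, h2 _ ⟨y, hy, rfl⟩, h3 u hu, h4 _ ⟨v, hv, rfl⟩,
    show p₀ (δ (δ w)) = 0 from h5 _ ⟨w, hw, rfl⟩]
  simp

lemma proj_one {δ : M →ₗ[F] M} {N₀ N₁ U : Submodule F M} {p₁ : M →ₗ[F] M}
    (hp₁ : ∀ x ∈ N₁, p₁ x = x)
    (hp₁0 : ∀ x ∈ N₀ ⊔ N₁.map δ ⊔ U ⊔ U.map δ ⊔ U.map (δ ∘ₗ δ), p₁ x = 0) :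
    ∀ a ∈ N₀, ∀ c ∈ N₁, ∀ y ∈ N₁, ∀ u ∈ U, ∀ v ∈ U, ∀ w ∈ U,
      p₁ (a + c + δ y + u + δ v + δ (δ w)) = c := by
  intro a ha c hc y hy u hu v hv w hw
  obtain ⟨h1, h2, h3, h4, h5⟩ := forall_mem_sup_eq_zero hp₁0
  simp only [map_add]
  rw [hp₁ c hc, h1 a ha, h2 _ ⟨y, hy, rfl⟩, h3 u hu, h4 _ ⟨v, hv, rfl⟩,
    show p₁ (δ (δ w)) = 0 from h5 _ ⟨w, hw, rfl⟩]
  simp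

/-- The invariant elements of `S` are those of `N₀` up to `δ(S)`. -/
lemma IsSplit.of_ker {δ : M →ₗ[F] M} {S N₀ N₁ U : Submodule F M} (h : IsSplit δ S N₀ N₁ U)
    (h1 : N₁ ≤ S) (hU : U ≤ S) (hS : ∀ x ∈ S, δ x ∈ S) {x : M} (hx : x ∈ S) (hx0 : δ x = 0) :
    ∃ a ∈ N₀, ∃ k ∈ S, x = a + δ k := by
  obtain ⟨a, ha, c, hc, y, hy, u, hu, v, hv, w, hw, rfl⟩ := h.ex x hx
  have := h.uniq 0 (zero_mem _) 0 (zero_mem _) c hc 0 (zero_mem _) u hu v hv (by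
    simpa [h.ker₀ a ha, h.ker₁ y hy, h.kerU w hw] using hx0)
  obtain ⟨-, -, rfl, -, rfl, rfl⟩ := this
  exact ⟨a, ha, y + δ w, add_mem (h1 hy) (hS _ (hU hw)), by simp [add_assoc]⟩

/-- The elements of `S` killed by `δ²` are those of `N₀ ⊕ N₁` up to `δ(S)`. -/
lemma IsSplit.of_ker2 {δ : M →ₗ[F] M} {S N₀ N₁ U : Submodule F M} (h : IsSplit δ S N₀ N₁ U)
    (h1 : N₁ ≤ S) (hU : U ≤ S) (hS : ∀ x ∈ S, δ x ∈ S) {x : M} (hx : x ∈ S)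
    (hx0 : δ (δ x) = 0) : ∃ a ∈ N₀, ∃ c ∈ N₁, ∃ k ∈ S, x = a + c + δ k := by
  obtain ⟨a, ha, c, hc, y, hy, u, hu, v, hv, w, hw, rfl⟩ := h.ex x hx
  have := h.uniq 0 (zero_mem _) 0 (zero_mem _) 0 (zero_mem _) 0 (zero_mem _) 0 (zero_mem _) u hu
    (by simpa [h.ker₀ a ha, h.ker₁ y hy, h.ker₁ c hc, h.kerU w hw, h.kerU v hv] using hx0)
  obtain ⟨-, -, -, -, -, rfl⟩ := this
  exact ⟨a, ha, c, hc, y + v + δ w, add_mem (add_mem (h1 hy) (hU hv)) (hS _ (hU hw)),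
    by simp [add_assoc]⟩

/-- The projections onto `N₀` and `N₁` along the splitting vanish on `δ(S)`. -/
lemma IsSplit.proj_im {δ : M →ₗ[F] M} {S N₀ N₁ U : Submodule F M} (h : IsSplit δ S N₀ N₁ U)
    {p₀ p₁ : M →ₗ[F] M}
    (hp₀ : ∀ a ∈ N₀, ∀ c ∈ N₁, ∀ y ∈ N₁, ∀ u ∈ U, ∀ v ∈ U, ∀ w ∈ U,
      p₀ (a + c + δ y + u + δ v + δ (δ w)) = a)
    (hp₁ : ∀ a ∈ N₀, ∀ c ∈ N₁, ∀ y ∈ N₁, ∀ u ∈ U, ∀ v ∈ U, ∀ w ∈ U,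
      p₁ (a + c + δ y + u + δ v + δ (δ w)) = c) {k : M} (hk : k ∈ S) :
    p₀ (δ k) = 0 ∧ p₁ (δ k) = 0 := by
  obtain ⟨a, ha, c, hc, y, hy, u, hu, v, hv, w, hw, rfl⟩ := h.ex k hk
  have e : δ (a + c + δ y + u + δ v + δ (δ w)) = 0 + 0 + δ c + 0 + δ u + δ (δ v) := by
    simp [h.ker₀ a ha, h.ker₁ y hy, h.kerU w hw]
  rw [e]
  exact ⟨hp₀ 0 (zero_mem _) 0 (zero_mem _) c hc 0 (zero_mem _) u hu v hv,
    hp₁ 0 (zero_mem _) 0 (zero_mem _) c hc 0 (zero_mem _) u hu v hv⟩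

/-- Existence of the partial inverses `q` and `e` of `δ` and `δ²`. -/
lemma IsSplit.exists_splitOps [CharP F 3] {δ p₀ p₁ : Module.End F M} {N₀ N₁ U : Submodule F M}
    (h : IsSplit δ ⊤ N₀ N₁ U)
    (hp₀ : ∀ a ∈ N₀, ∀ c ∈ N₁, ∀ y ∈ N₁, ∀ u ∈ U, ∀ v ∈ U, ∀ w ∈ U,
      p₀ (a + c + δ y + u + δ v + δ (δ w)) = a)
    (hp₁ : ∀ a ∈ N₀, ∀ c ∈ N₁, ∀ y ∈ N₁, ∀ u ∈ U, ∀ v ∈ U, ∀ w ∈ U,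
      p₁ (a + c + δ y + u + δ v + δ (δ w)) = c) :
    ∃ q e : Module.End F M, SplitOps δ p₀ p₁ q e ∧
      ∀ a ∈ N₀, ∀ c ∈ N₁, ∀ y ∈ N₁, ∀ u ∈ U, ∀ v ∈ U, ∀ w ∈ U,
        q (a + c + δ y + u + δ v + δ (δ w)) = y := by
  let Θ : (N₀ × N₁ × N₁ × U × U × U) →ₗ[F] M :=
    N₀.subtype.coprod (N₁.subtype.coprod ((δ ∘ₗ N₁.subtype).coprod (U.subtype.coprod
      ((δ ∘ₗ U.subtype).coprod (δ ∘ₗ δ ∘ₗ U.subtype)))))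
  have hΘ : ∀ a c y u v w, Θ (a, c, y, u, v, w)
      = (a : M) + c + δ y + u + δ v + δ (δ w) := by
    intro a c y u v w
    simp [Θ, add_assoc]
  have hbij : Function.Bijective Θ := by
    constructor
    · rw [← LinearMap.ker_eq_bot, LinearMap.ker_eq_bot']
      rintro ⟨a, c, y, u, v, w⟩ h0
      rw [hΘ] at h0
      obtain ⟨h1, h2, h3, h4, h5, h6⟩ := h.uniq _ a.2 _ c.2 _ y.2 _ u.2 _ v.2 _ w.2 h0
      simp only [Submodule.coe_eq_zero] at h1 h2 h3 h4 h5 h6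
      simp [h1, h2, h3, h4, h5, h6]
    · intro x
      obtain ⟨a, ha, c, hc, y, hy, u, hu, v, hv, w, hw, rfl⟩ := h.ex x trivial
      exact ⟨(⟨a, ha⟩, ⟨c, hc⟩, ⟨y, hy⟩, ⟨u, hu⟩, ⟨v, hv⟩, ⟨w, hw⟩), hΘ _ _ _ _ _ _⟩
  let E := LinearEquiv.ofBijective Θ hbij
  let c3 : (N₀ × N₁ × N₁ × U × U × U) →ₗ[F] M :=
    N₁.subtype ∘ₗ LinearMap.fst F _ _ ∘ₗ LinearMap.snd F _ _ ∘ₗ LinearMap.snd F _ _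
  let c6 : (N₀ × N₁ × N₁ × U × U × U) →ₗ[F] M :=
    U.subtype ∘ₗ LinearMap.snd F _ _ ∘ₗ LinearMap.snd F _ _ ∘ₗ LinearMap.snd F _ _ ∘ₗ
      LinearMap.snd F _ _ ∘ₗ LinearMap.snd F _ _
  let q : Module.End F M := c3 ∘ₗ E.symm.toLinearMap
  let e : Module.End F M := c6 ∘ₗ E.symm.toLinearMap
  have hE : ∀ a (ha : a ∈ N₀) c (hc : c ∈ N₁) y (hy : y ∈ N₁) u (hu : u ∈ U) v (hv : v ∈ U)
      w (hw : w ∈ U), E.symm (a + c + δ y + u + δ v + δ (δ w))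
        = (⟨a, ha⟩, ⟨c, hc⟩, ⟨y, hy⟩, ⟨u, hu⟩, ⟨v, hv⟩, ⟨w, hw⟩) := by
    intro a ha c hc y hy u hu v hv w hw
    rw [LinearEquiv.symm_apply_eq]
    exact (hΘ ⟨a, ha⟩ ⟨c, hc⟩ ⟨y, hy⟩ ⟨u, hu⟩ ⟨v, hv⟩ ⟨w, hw⟩).symm
  have hq : ∀ a ∈ N₀, ∀ c ∈ N₁, ∀ y ∈ N₁, ∀ u ∈ U, ∀ v ∈ U, ∀ w ∈ U,
      q (a + c + δ y + u + δ v + δ (δ w)) = y := by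
    intro a ha c hc y hy u hu v hv w hw
    simp only [q, LinearMap.comp_apply, LinearEquiv.coe_coe, hE a ha c hc y hy u hu v hv w hw]
    rfl
  have he : ∀ a ∈ N₀, ∀ c ∈ N₁, ∀ y ∈ N₁, ∀ u ∈ U, ∀ v ∈ U, ∀ w ∈ U,
      e (a + c + δ y + u + δ v + δ (δ w)) = w := by
    intro a ha c hc y hy u hu v hv w hw
    simp only [e, LinearMap.comp_apply, LinearEquiv.coe_coe, hE a ha c hc y hy u hu v hv w hw]
    rfl
  have z₀ : (0 : M) ∈ N₀ := zero_mem _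
  have z₁ : (0 : M) ∈ N₁ := zero_mem _
  have zU : (0 : M) ∈ U := zero_mem _
  have p₀0 : ∀ c ∈ N₁, p₀ c = 0 := fun c hc => by
    simpa using hp₀ 0 z₀ c hc 0 z₁ 0 zU 0 zU 0 zU
  have p₁0 : ∀ a ∈ N₀, p₁ a = 0 := fun a ha => by
    simpa using hp₁ a ha 0 z₁ 0 z₁ 0 zU 0 zU 0 zU
  have q0 : ∀ a ∈ N₀, q a = 0 := fun a ha => by
    simpa using hq a ha 0 z₁ 0 z₁ 0 zU 0 zU 0 zU
  have p₀1 : ∀ a ∈ N₀, p₀ a = a := fun a ha => by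
    simpa using hp₀ a ha 0 z₁ 0 z₁ 0 zU 0 zU 0 zU
  have p₁1 : ∀ c ∈ N₁, p₁ c = c := fun c hc => by
    simpa using hp₁ 0 z₀ c hc 0 z₁ 0 zU 0 zU 0 zU
  have key : ∀ T : Module.End F M, (∀ a ∈ N₀, ∀ c ∈ N₁, ∀ y ∈ N₁, ∀ u ∈ U, ∀ v ∈ U, ∀ w ∈ U,
      T (a + c + δ y + u + δ v + δ (δ w)) = 0) → T = 0 := by
    intro T hT
    ext x
    obtain ⟨a, ha, c, hc, y, hy, u, hu, v, hv, w, hw, rfl⟩ := h.ex x trivial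
    exact hT a ha c hc y hy u hu v hv w hw
  have hδ : ∀ a ∈ N₀, ∀ c ∈ N₁, ∀ y ∈ N₁, ∀ u ∈ U, ∀ v ∈ U, ∀ w ∈ U,
      δ (a + c + δ y + u + δ v + δ (δ w)) = 0 + 0 + δ c + 0 + δ u + δ (δ v) := by
    intro a ha c hc y hy u hu v hv w hw
    simp [h.ker₀ a ha, h.ker₁ y hy, h.kerU w hw]
  refine ⟨q, e, ?_, hq⟩
  constructor
  · have h3 : (3 : F) = 0 := by exact_mod_cast CharP.cast_eq_zero F 3
    rw [← map_ofNat (algebraMap F (Module.End F M)) 3, h3, map_zero]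
  · apply key
    intro a ha c hc y hy u hu v hv w hw
    simp only [Module.End.mul_apply]
    rw [hδ a ha c hc y hy u hu v hv w hw, hδ 0 z₀ 0 z₁ c hc 0 zU u hu v hv]
    simp [h.kerU u hu]
  · apply key
    intro a ha c hc y hy u hu v hv w hw
    simp only [Module.End.mul_apply]
    rw [hδ a ha c hc y hy u hu v hv w hw, hp₀ 0 z₀ 0 z₁ c hc 0 zU u hu v hv]
  · apply key
    intro a ha c hc y hy u hu v hv w hw
    simp only [Module.End.mul_apply]
    rw [hp₀ a ha c hc y hy u hu v hv w hw, h.ker₀ a ha]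
  · apply key
    intro a ha c hc y hy u hu v hv w hw
    simp only [Module.End.mul_apply]
    rw [hδ a ha c hc y hy u hu v hv w hw, hp₁ 0 z₀ 0 z₁ c hc 0 zU u hu v hv]
  · apply key
    intro a ha c hc y hy u hu v hv w hw
    simp only [Module.End.mul_apply]
    rw [hp₁ a ha c hc y hy u hu v hv w hw, h.ker₁ c hc]
  · rw [← sub_eq_zero]
    apply key
    intro a ha c hc y hy u hu v hv w hw
    simp only [Module.End.mul_apply, LinearMap.sub_apply]
    rw [hp₁ a ha c hc y hy u hu v hv w hw, hδ a ha c hc y hy u hu v hv w hw,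
      hq 0 z₀ 0 z₁ c hc 0 zU u hu v hv, sub_self]
  · rw [← sub_eq_zero]
    apply key
    intro a ha c hc y hy u hu v hv w hw
    simp only [Module.End.mul_apply, LinearMap.sub_apply]
    rw [hp₀ a ha c hc y hy u hu v hv w hw, p₀1 a ha, sub_self]
  · rw [← sub_eq_zero]
    apply key
    intro a ha c hc y hy u hu v hv w hw
    simp only [Module.End.mul_apply, LinearMap.sub_apply]
    rw [hp₁ a ha c hc y hy u hu v hv w hw, p₁1 c hc, sub_self]
  · apply key
    intro a ha c hc y hy u hu v hv w hw
    simp only [Module.End.mul_apply]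
    rw [hp₁ a ha c hc y hy u hu v hv w hw, p₀0 c hc]
  · apply key
    intro a ha c hc y hy u hu v hv w hw
    simp only [Module.End.mul_apply]
    rw [hp₀ a ha c hc y hy u hu v hv w hw, p₁0 a ha]
  · rw [← sub_eq_zero]
    apply key
    intro a ha c hc y hy u hu v hv w hw
    simp only [Module.End.mul_apply, LinearMap.sub_apply]
    rw [hq a ha c hc y hy u hu v hv w hw, p₁1 y hy, sub_self]
  · apply key
    intro a ha c hc y hy u hu v hv w hw
    simp only [Module.End.mul_apply]
    rw [hp₀ a ha c hc y hy u hu v hv w hw, q0 a ha]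
  · rw [← sub_eq_zero]
    apply key
    intro a ha c hc y hy u hu v hv w hw
    simp only [Module.End.mul_apply, LinearMap.sub_apply, LinearMap.add_apply,
      Module.End.one_apply]
    rw [hδ a ha c hc y hy u hu v hv w hw, hδ 0 z₀ 0 z₁ c hc 0 zU u hu v hv,
      hp₀ a ha c hc y hy u hu v hv w hw, hp₁ a ha c hc y hy u hu v hv w hw,
      hq a ha c hc y hy u hu v hv w hw, he a ha c hc y hy u hu v hv w hw,
      he 0 z₀ 0 z₁ c hc 0 zU u hu v hv, he 0 z₀ 0 z₁ 0 z₁ 0 zU 0 zU u hu]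
    abel

end Splitting

namespace SplitOps

/-! ### Normal forms and lifts

Normal forms modulo `im δ` of the values of operators on `V₀`, `V₁` and `δ(V₁)`. -/

section Normal

variable {R : Type*} [Ring R] {δ A B q e : R}

lemma normal_A (S : SplitOps δ A B q e) {f : R} (hf : δ * f = f * δ) :
    ∃ Y, f * A = A * f * A + δ * Y :=
  ⟨(q + δ * e) * (f * A), by
    have h := S.ker_eq (x := f * A)
      (by linear_combination (norm := noncomm_ring) hf * A + f * S.dA)
    rwa [← mul_assoc A] at h⟩

lemma normal_B (S : SplitOps δ A B q e) {f : R} (hf : δ * f = f * δ) :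
    ∃ Y, f * B = A * f * B + B * f * B + δ * Y :=
  ⟨(q + δ * e + e * δ) * (f * B), by
    have h := S.ker2_eq (x := f * B)
      (by linear_combination (norm := noncomm_ring) δ * hf * B + hf * δ * B + f * S.ddB)
    rwa [← mul_assoc A, ← mul_assoc B] at h⟩

lemma normal_quad_A (S : SplitOps δ A B q e) {g : R}
    (hg : δ * δ * g + δ * g * δ + g * δ * δ = 0) :
    ∃ Y, g * A = A * g * A + B * g * A + δ * Y :=
  ⟨(q + δ * e + e * δ) * (g * A), by
    have h := S.ker2_eq (S.quad_A hg)
    rwa [← mul_assoc A, ← mul_assoc B] at h⟩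

lemma normal_quad_dB (S : SplitOps δ A B q e) {g : R}
    (hg : δ * δ * g + δ * g * δ + g * δ * δ = 0) :
    ∃ Z, g * δ * B = A * g * δ * B + δ * Z :=
  ⟨(q + δ * e) * (g * δ * B + δ * g * B) - g * B, by
    linear_combination (norm := noncomm_ring) S.ker_eq (quad_dB S.ddB hg) + S.Ad * g * B⟩

/-- Every even operator on `V₀ ⊕ V₁` is the even part of an operator commuting with `δ`. -/
lemma lift_even (S : SplitOps δ A B q e) {T : R} (hT : T = A * T * A + B * T * B) :
    δ * (T + δ * T * q) = (T + δ * T * q) * δ ∧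
      A * (T + δ * T * q) * A + B * (T + δ * T * q) * B = T := by
  constructor
  · have h1 : δ * T = δ * B * T * B := by
      linear_combination (norm := noncomm_ring) δ * hT + S.dA * T * A
    have h2 : T * δ = 0 := by
      linear_combination (norm := noncomm_ring) hT * δ + A * T * S.Ad + B * T * S.Bd
    linear_combination (norm := noncomm_ring) δ * h1 * q + S.ddB * T * B * q - h2 - δ * T * S.qd
      + h1 - h1 * B - δ * B * T * S.BB
  · linear_combination (norm := noncomm_ring) -hT + S.Ad * T * q * A + S.Bd * T * q * B

/-- Every odd operator on `V₀ ⊕ V₁` is the odd part of an operator killed by `(ad δ)²`. -/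
lemma lift_odd (S : SplitOps δ A B q e) {T : R} (hT : T = B * T * A + A * T * B) :
    δ * δ * (T * A + T * q) + δ * (T * A + T * q) * δ + (T * A + T * q) * δ * δ = 0 ∧
      B * (T * A + T * q) * A + A * (T * A + T * q) * δ * B = T := by
  constructor
  · have h1 : δ * δ * T = 0 := by
      linear_combination (norm := noncomm_ring) δ * δ * hT + S.ddB * T * A + δ * S.dA * T * B
    have h2 : δ * T * B = 0 := by
      linear_combination (norm := noncomm_ring) δ * hT * B + δ * B * T * S.AB + S.dA * T * B * B
    linear_combination (norm := noncomm_ring) h1 * A + h1 * q + δ * T * S.Ad + δ * T * S.qd + h2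
      + T * S.Ad * δ + T * S.qd * δ + T * S.Bd
  · linear_combination (norm := noncomm_ring) -hT + B * T * S.AA + B * T * S.qA + A * T * S.Ad * B
      + A * T * S.qd * B + A * T * S.BB

end Normal

/-! ### The form on the superspace -/

section Form

variable {F V : Type*} [Field F] [AddCommGroup V] [Module F V]
  {b : V →ₗ[F] V →ₗ[F] F} {δ A B q e : Module.End F V}

lemma form_im_ker (hδb : ∀ x y, b (δ x) y = b x (δ (δ y)) - b x (δ y)) {x y : V}
    (hy : δ y = 0) : b (δ x) y = 0 := by
  rw [hδb, hy]; simp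

lemma form_ker_im (hs : ∀ x y, b x y = b y x)
    (hδb : ∀ x y, b (δ x) y = b x (δ (δ y)) - b x (δ y)) {x y : V}
    (hy : δ y = 0) : b y (δ x) = 0 := by
  rw [hs, form_im_ker hδb hy]

lemma form_ker2_im2 (hs : ∀ x y, b x y = b y x)
    (hδb : ∀ x y, b (δ x) y = b x (δ (δ y)) - b x (δ y)) {x y : V}
    (hy : δ (δ y) = 0) : b y (δ (δ x)) = 0 := by
  rw [hs, hδb, hδb, hδb, hy]; simp

/-- The form `nˢ` is nondegenerate on `V₀ ⊕ V₁`.  For `x` in the radical the decomposition of the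
identity, read through the adjoints of `q` and `e`, exhibits `x` (if `x ∈ V₀`) or `δ x` (if
`x ∈ V₁`) as an element of `im δ` or `im δ²`. -/
lemma nondeg (S : SplitOps δ A B q e) (hs : ∀ x y, b x y = b y x)
    (hnd : ∀ x, (∀ y, b x y = 0) → x = 0)
    (hadj : ∀ f : Module.End F V, ∃ g : Module.End F V, ∀ x y, b (g x) y = b x (f y))
    (hδb : ∀ x y, b (δ x) y = b x (δ (δ y)) - b x (δ y)) {x : V}
    (hx : ∀ y, b (A x) (A y) + b (B x) (δ (B y)) = 0) : A x = 0 ∧ B x = 0 := by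
  have dA : ∀ x, δ (A x) = 0 := fun x => LinearMap.congr_fun S.dA x
  have ddB : ∀ x, δ (δ (B x)) = 0 := fun x => LinearMap.congr_fun S.ddB x
  have AA : ∀ x, A (A x) = A x := fun x => LinearMap.congr_fun S.AA x
  have BB : ∀ x, B (B x) = B x := fun x => LinearMap.congr_fun S.BB x
  have AB : ∀ x, A (B x) = 0 := fun x => LinearMap.congr_fun S.AB x
  have BA : ∀ x, B (A x) = 0 := fun x => LinearMap.congr_fun S.BA x
  have qd : ∀ x, q (δ x) = B x := fun x => LinearMap.congr_fun S.qd x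
  have Ad : ∀ x, A (δ x) = 0 := fun x => LinearMap.congr_fun S.Ad x
  have Bd : ∀ x, B (δ x) = 0 := fun x => LinearMap.congr_fun S.Bd x
  have ddd : ∀ x, δ (δ (δ x)) = 0 := fun x => LinearMap.congr_fun S.ddd x
  have one : ∀ y, A y + B y + δ (q y) + (δ (δ (e y)) + δ (e (δ y)) + e (δ (δ y))) = y :=
    fun y => LinearMap.congr_fun S.one y
  have hdb' : ∀ x y, b x (δ y) = b (δ (δ x) - δ x) y := by
    intro x y
    rw [hs x, hδb, map_sub, LinearMap.sub_apply, hs _ y, hs _ y]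
  obtain ⟨q', hq'⟩ := hadj q
  obtain ⟨e', he'⟩ := hadj e
  have h0 : ∀ y, b (A x) (A y) = 0 := fun y => by simpa [AA, BA] using hx (A y)
  have h1 : ∀ y, b (B x) (δ (B y)) = 0 := fun y => by simpa [BB, AB] using hx (B y)
  -- an element `z` of `ker δ` pairs with `V` through `A`, `B` and `e δ²` only
  have hz : ∀ z, δ z = 0 → ∀ y, b z y = b z (A y) + b z (B y) + b z (e (δ (δ y))) := by
    intro z hz y
    conv_lhs => rw [← one y]
    simp only [map_add, form_ker_im hs hδb hz]
    ring
  have he2 : ∀ z y, b z (e (δ (δ y))) = b (δ (δ (e' z))) y := by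
    intro z y
    rw [← he', hdb', hdb']
    simp [ddd]
  constructor
  · have : A x = δ (δ (q' (A x)) - q' (A x) + δ (e' (A x))) := by
      rw [← sub_eq_zero]
      apply hnd
      intro y
      rw [map_sub, LinearMap.sub_apply, hz _ (dA x), h0, ← qd, ← hq', hdb', he2]
      simp
    rw [← AA x, this, Ad]
  · have : δ (B x) = δ (δ (e' (δ (B x)))) := by
      rw [← sub_eq_zero]
      apply hnd
      intro y
      rw [map_sub, LinearMap.sub_apply, hz _ (ddB x), form_im_ker hδb (dA y),
        hδb (B x) (B y), ddB, h1, he2]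
      simp
    rw [← BB x, ← qd, this, qd, Bd]

variable {ns : V → V → F}

/-- The even part of an invariant operator and of its adjoint are adjoint for `nˢ`. -/
lemma even_adj (S : SplitOps δ A B q e) (hs : ∀ x y, b x y = b y x)
    (hδb : ∀ x y, b (δ x) y = b x (δ (δ y)) - b x (δ y))
    (hns : ∀ x y, ns x y = b (A x) (A y) + b (B x) (δ (B y)))
    {f g : Module.End F V} (hfg : ∀ x y, b (f x) y = b x (g y))
    (hf : δ * f = f * δ) (hg : δ * g = g * δ) (x y : V) :
    ns ((A * f * A + B * f * B) x) y = ns x ((A * g * A + B * g * B) y) := by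
  have dA : ∀ x, δ (A x) = 0 := fun x => LinearMap.congr_fun S.dA x
  have ddB : ∀ x, δ (δ (B x)) = 0 := fun x => LinearMap.congr_fun S.ddB x
  have AA : ∀ x, A (A x) = A x := fun x => LinearMap.congr_fun S.AA x
  have BB : ∀ x, B (B x) = B x := fun x => LinearMap.congr_fun S.BB x
  have AB : ∀ x, A (B x) = 0 := fun x => LinearMap.congr_fun S.AB x
  have BA : ∀ x, B (A x) = 0 := fun x => LinearMap.congr_fun S.BA x
  obtain ⟨Y, hY⟩ := S.normal_A hf
  obtain ⟨Z, hZ⟩ := S.normal_B hf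
  obtain ⟨Y', hY'⟩ := S.normal_A hg
  obtain ⟨Z', hZ'⟩ := S.normal_B hg
  have hY : f (A x) = A (f (A x)) + δ (Y x) := LinearMap.congr_fun hY x
  have hZ : f (B x) = A (f (B x)) + B (f (B x)) + δ (Z x) := LinearMap.congr_fun hZ x
  have hY' : g (A y) = A (g (A y)) + δ (Y' y) := LinearMap.congr_fun hY' y
  have hZ' : g (B y) = A (g (B y)) + B (g (B y)) + δ (Z' y) := LinearMap.congr_fun hZ' y
  have hg' : ∀ x, δ (g x) = g (δ x) := fun x => LinearMap.congr_fun hg x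
  have h0 : b (A (f (A x))) (A y) = b (A x) (A (g (A y))) := by
    have h := hfg (A x) (A y)
    rw [hY, hY'] at h
    simpa [form_im_ker hδb (dA y), form_ker_im hs hδb (dA x)] using h
  have h1 : b (B (f (B x))) (δ (B y)) = b (B x) (δ (B (g (B y)))) := by
    have h := hfg (B x) (δ (B y))
    rw [← hg', hZ, hZ'] at h
    simpa [form_im_ker hδb (ddB y), form_ker2_im2 hs hδb (ddB x), dA,
      form_ker_im hs hδb (dA _)] using h
  rw [hns, hns]
  simpa [AA, BB, AB, BA] using congrArg₂ (· + ·) h0 h1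

/-- The odd part of an operator killed by `(ad δ)²` and of its adjoint are super-adjoint for
`nˢ`. -/
lemma odd_adj (S : SplitOps δ A B q e) (hs : ∀ x y, b x y = b y x)
    (hδb : ∀ x y, b (δ x) y = b x (δ (δ y)) - b x (δ y))
    (hns : ∀ x y, ns x y = b (A x) (A y) + b (B x) (δ (B y)))
    {f g : Module.End F V} (hfg : ∀ x y, b (f x) y = b x (g y))
    (hf : δ * δ * f + δ * f * δ + f * δ * δ = 0)
    (hg : δ * δ * g + δ * g * δ + g * δ * δ = 0) (x y : V) :
    ns ((B * f * A + A * f * δ * B) (A x)) y = ns (A x) ((B * g * A + A * g * δ * B) y) ∧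
    ns ((B * f * A + A * f * δ * B) (B x)) y = - ns (B x) ((B * g * A + A * g * δ * B) y) := by
  have dA : ∀ x, δ (A x) = 0 := fun x => LinearMap.congr_fun S.dA x
  have ddB : ∀ x, δ (δ (B x)) = 0 := fun x => LinearMap.congr_fun S.ddB x
  have AA : ∀ x, A (A x) = A x := fun x => LinearMap.congr_fun S.AA x
  have BB : ∀ x, B (B x) = B x := fun x => LinearMap.congr_fun S.BB x
  have AB : ∀ x, A (B x) = 0 := fun x => LinearMap.congr_fun S.AB x
  have BA : ∀ x, B (A x) = 0 := fun x => LinearMap.congr_fun S.BA x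
  obtain ⟨Y, hY⟩ := S.normal_quad_A hf
  obtain ⟨Z, hZ⟩ := S.normal_quad_dB hf
  obtain ⟨Y', hY'⟩ := S.normal_quad_A hg
  obtain ⟨Z', hZ'⟩ := S.normal_quad_dB hg
  have hY : f (A x) = A (f (A x)) + B (f (A x)) + δ (Y x) := LinearMap.congr_fun hY x
  have hZ : f (δ (B x)) = A (f (δ (B x))) + δ (Z x) := LinearMap.congr_fun hZ x
  have hY' : g (A y) = A (g (A y)) + B (g (A y)) + δ (Y' y) := LinearMap.congr_fun hY' y
  have hZ' : g (δ (B y)) = A (g (δ (B y))) + δ (Z' y) := LinearMap.congr_fun hZ' y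
  have hgA : δ (δ (g (A y))) = 0 := LinearMap.congr_fun (S.quad_A hg) y
  constructor
  · have h : b (B (f (A x))) (δ (B y)) = b (A x) (A (g (δ (B y)))) := by
      have h := hfg (A x) (δ (B y))
      rw [hY, hZ'] at h
      simpa [form_im_ker hδb (ddB y), form_ker_im hs hδb (dA _)] using h
    rw [hns, hns]
    simpa [AA, BB, AB, BA] using h
  · have h : b (A (f (δ (B x)))) (A y) = - b (B x) (δ (B (g (A y)))) := by
      have h := hfg (δ (B x)) (A y)
      rw [hδb, hgA, hZ, hY'] at h
      simpa [form_im_ker hδb (dA y), form_ker2_im2 hs hδb (ddB x), dA] using h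
    rw [hns, hns]
    simpa [AA, BB, AB, BA] using h

end Form

end SplitOps

/-! ### Conjugation by `σ = 1 + δ` -/

section DeltaFormula

variable {R : Type*} [Ring R] {δ : R}

lemma conj_sub (h3 : (3 : R) = 0) (hd : δ * δ * δ = 0) (f : R) :
    (1 + δ) * (f * ((1 + δ) * (1 + δ))) - f = (δ * f - f * δ) * (1 + 2 * δ + δ * δ) := by
  linear_combination (norm := noncomm_ring) f * hd + f * h3 * (δ + δ * δ)

lemma inv_iff (h3 : (3 : R) = 0) (hd : δ * δ * δ = 0) (f : R) :
    (δ * f - f * δ) * (1 + 2 * δ + δ * δ) = 0 ↔ δ * f = f * δ := by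
  constructor
  · intro h
    linear_combination (norm := noncomm_ring) h * (1 + δ) - (δ * f - f * δ) * hd
      - (δ * f - f * δ) * h3 * (δ + δ * δ)
  · intro h
    linear_combination (norm := noncomm_ring) h * (1 + 2 * δ + δ * δ)

lemma quad_iff (h3 : (3 : R) = 0) (hd : δ * δ * δ = 0) (f : R) :
    (δ * ((δ * f - f * δ) * (1 + 2 * δ + δ * δ)) - (δ * f - f * δ) * (1 + 2 * δ + δ * δ) * δ)
      * (1 + 2 * δ + δ * δ) = 0 ↔ δ * δ * f + δ * f * δ + f * δ * δ = 0 := by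
  rw [inv_iff h3 hd]
  have e : δ * ((δ * f - f * δ) * (1 + 2 * δ + δ * δ))
      - (δ * f - f * δ) * (1 + 2 * δ + δ * δ) * δ
      = (δ * δ * f + δ * f * δ + f * δ * δ) * (1 + 2 * δ + δ * δ) := by
    linear_combination (norm := noncomm_ring) -(δ * f * h3 * (δ + 2 * δ * δ + δ * δ * δ))
  rw [← sub_eq_zero, e]
  constructor
  · intro h
    linear_combination (norm := noncomm_ring) h * (1 + δ)
      - (δ * δ * f + δ * f * δ + f * δ * δ) * hd
      - (δ * δ * f + δ * f * δ + f * δ * δ) * h3 * (δ + δ * δ)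
  · intro h
    rw [h, zero_mul]

end DeltaFormula

/-! ### The recipe applied to `so(V, b)` -/

section Recipe

variable {F V : Type*} [Field F] [AddCommGroup V] [Module F V]

/-- The part of an operator preserving the two summands `V₀`, `V₁`, given the projections `A`
and `B` onto them. -/
def evenPart (A B : Module.End F V) : Module.End F V →ₗ[F] Module.End F V :=
  LinearMap.mulLeft F A ∘ₗ LinearMap.mulRight F A + LinearMap.mulLeft F B ∘ₗ LinearMap.mulRight F B

/-- The operator exchanging `V₀` and `V₁` defined by `f`: it is the projection of `f x` to `V₁`
for `x ∈ V₀`, and the projection of `f (δ x)` to `V₀` for `x ∈ V₁`. -/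
def oddPart (δ A B : Module.End F V) : Module.End F V →ₗ[F] Module.End F V :=
  LinearMap.mulLeft F B ∘ₗ LinearMap.mulRight F A
    + LinearMap.mulLeft F A ∘ₗ LinearMap.mulRight F (δ * B)

lemma evenPart_apply (A B f : Module.End F V) : evenPart A B f = A * f * A + B * f * B := by
  simp [evenPart, mul_assoc]

lemma oddPart_apply (δ A B f : Module.End F V) :
    oddPart δ A B f = B * f * A + A * f * δ * B := by
  simp [oddPart, mul_assoc]

/-- A splitting of `V` together with a splitting `L₀ ⊕ L₁ ⊕ Δ(L₁) ⊕ L₂` of a Lie algebra `so` of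
operators on `V` that is stable under `Δ`, with the projections `P₀`, `P₁` onto `L₀`, `L₁`.  The
field `descend` says that `so` is a `Δ`-stable direct summand, as far as needed. -/
structure RecipeData (δ A B q e : Module.End F V)
    (Δ : Module.End F V →ₗ[F] Module.End F V) (so L₀ L₁ LU : Submodule F (Module.End F V))
    (P₀ P₁ : Module.End F V →ₗ[F] Module.End F V) : Prop where
  ops : SplitOps δ A B q e
  Δ_apply : ∀ f, Δ f = (δ * f - f * δ) * (1 + 2 * δ + δ * δ)
  so_Δ : ∀ f ∈ so, Δ f ∈ so
  so_comm : ∀ f ∈ so, ∀ g ∈ so, f * g - g * f ∈ so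
  descend : ∀ f ∈ so, ∀ l k, Δ l = 0 → f = l + Δ k →
    ∃ l' ∈ so, ∃ k' ∈ so, Δ l' = 0 ∧ (l = 0 → l' = 0) ∧ f = l' + Δ k'
  split : IsSplit Δ so L₀ L₁ LU
  le₀ : L₀ ≤ so
  le₁ : L₁ ≤ so
  leU : LU ≤ so
  proj₀ : ∀ a ∈ L₀, ∀ c ∈ L₁, ∀ y ∈ L₁, ∀ u ∈ LU, ∀ v ∈ LU, ∀ w ∈ LU,
    P₀ (a + c + Δ y + u + Δ v + Δ (Δ w)) = a
  proj₁ : ∀ a ∈ L₀, ∀ c ∈ L₁, ∀ y ∈ L₁, ∀ u ∈ LU, ∀ v ∈ LU, ∀ w ∈ LU,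
    P₁ (a + c + Δ y + u + Δ v + Δ (Δ w)) = c

namespace RecipeData

variable {δ A B q e : Module.End F V} {Δ : Module.End F V →ₗ[F] Module.End F V}
  {so L₀ L₁ LU : Submodule F (Module.End F V)} {P₀ P₁ : Module.End F V →ₗ[F] Module.End F V}

lemma inv (D : RecipeData δ A B q e Δ so L₀ L₁ LU P₀ P₁) (f : Module.End F V) :
    Δ f = 0 ↔ δ * f = f * δ := by
  rw [D.Δ_apply, inv_iff D.ops.three D.ops.ddd]

lemma quad (D : RecipeData δ A B q e Δ so L₀ L₁ LU P₀ P₁) (f : Module.End F V) :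
    Δ (Δ f) = 0 ↔ δ * δ * f + δ * f * δ + f * δ * δ = 0 := by
  rw [D.Δ_apply, D.Δ_apply, quad_iff D.ops.three D.ops.ddd]

lemma P_L₀ (D : RecipeData δ A B q e Δ so L₀ L₁ LU P₀ P₁) {f} (hf : f ∈ L₀) :
    P₀ f = f ∧ P₁ f = 0 := by
  constructor
  · simpa using D.proj₀ f hf 0 (zero_mem _) 0 (zero_mem _) 0 (zero_mem _) 0 (zero_mem _) 0
      (zero_mem _)
  · simpa using D.proj₁ f hf 0 (zero_mem _) 0 (zero_mem _) 0 (zero_mem _) 0 (zero_mem _) 0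
      (zero_mem _)

lemma P_L₁ (D : RecipeData δ A B q e Δ so L₀ L₁ LU P₀ P₁) {f} (hf : f ∈ L₁) :
    P₀ f = 0 ∧ P₁ f = f := by
  constructor
  · simpa using D.proj₀ 0 (zero_mem _) f hf 0 (zero_mem _) 0 (zero_mem _) 0 (zero_mem _) 0
      (zero_mem _)
  · simpa using D.proj₁ 0 (zero_mem _) f hf 0 (zero_mem _) 0 (zero_mem _) 0 (zero_mem _) 0
      (zero_mem _)

lemma P_mem (D : RecipeData δ A B q e Δ so L₀ L₁ LU P₀ P₁) {f} (hf : f ∈ so) :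
    P₀ f ∈ L₀ ∧ P₁ f ∈ L₁ := by
  obtain ⟨a, ha, c, hc, y, hy, u, hu, v, hv, w, hw, rfl⟩ := D.split.ex f hf
  rw [D.proj₀ a ha c hc y hy u hu v hv w hw, D.proj₁ a ha c hc y hy u hu v hv w hw]
  exact ⟨ha, hc⟩

lemma P_im (D : RecipeData δ A B q e Δ so L₀ L₁ LU P₀ P₁) {k} (hk : k ∈ so) :
    P₀ (Δ k) = 0 ∧ P₁ (Δ k) = 0 :=
  D.split.proj_im D.proj₀ D.proj₁ hk

/-- An invariant element of `so` lies in `L₀` up to some `Δ k` with `Δ (Δ k) = 0`, on which `evenPart`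
vanishes. -/
lemma P_inv (D : RecipeData δ A B q e Δ so L₀ L₁ LU P₀ P₁) {f} (hf : f ∈ so)
    (h0 : Δ f = 0) : P₁ f = 0 ∧ evenPart A B (P₀ f) = evenPart A B f := by
  obtain ⟨a, ha, k, hk, rfl⟩ := D.split.of_ker D.le₁ D.leU D.so_Δ hf h0
  have hk2 : Δ (Δ k) = 0 := by simpa [D.split.ker₀ a ha] using h0
  have h1 : evenPart A B (Δ k) = 0 := by
    rw [evenPart_apply, D.Δ_apply]
    exact D.ops.even_im ((D.quad k).1 hk2)
  simp [D.P_im hk, D.P_L₀ ha, h1]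

/-- An element of `so` killed by `Δ²` lies in `L₀ ⊕ L₁` up to `Δ(so)`, and `oddPart` vanishes on
`L₀` and on `Δ(so)`. -/
lemma P_quad (D : RecipeData δ A B q e Δ so L₀ L₁ LU P₀ P₁) {f} (hf : f ∈ so)
    (h0 : Δ (Δ f) = 0) : oddPart δ A B (P₁ f) = oddPart δ A B f := by
  obtain ⟨a, ha, c, hc, k, hk, rfl⟩ := D.split.of_ker2 D.le₁ D.leU D.so_Δ hf h0
  have h1 : oddPart δ A B a = 0 := by
    rw [oddPart_apply]
    exact D.ops.odd_inv ((D.inv a).1 (D.split.ker₀ a ha))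
  have h2 : oddPart δ A B (Δ k) = 0 := by
    rw [oddPart_apply, D.Δ_apply]
    exact D.ops.odd_im k
  simp [D.P_im hk, D.P_L₀ ha, D.P_L₁ hc, h1, h2]

lemma im_eq (D : RecipeData δ A B q e Δ so L₀ L₁ LU P₀ P₁) (k : Module.End F V) :
    δ * k - k * δ = Δ (k * (1 + δ)) := by
  rw [D.Δ_apply]
  linear_combination (norm := noncomm_ring) -((δ * k - k * δ) * D.ops.ddd)
    - (δ * k - k * δ) * D.ops.three * (δ + δ * δ)

/-- If the even part of `a ∈ L₀` vanishes, then `a` is in the image of `Δ`, hence in `Δ(so)`, which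
`P₀` kills. -/
lemma even_inj (D : RecipeData δ A B q e Δ so L₀ L₁ LU P₀ P₁) {a} (ha : a ∈ L₀)
    (h : evenPart A B a = 0) : a = 0 := by
  rw [evenPart_apply] at h
  have hA : A * a * A = 0 := by
    linear_combination (norm := noncomm_ring) A * h * A - D.ops.AA * a * A * A
      - A * a * D.ops.AA - D.ops.AB * a * B * A
  have hB : B * a * B = 0 := by
    linear_combination (norm := noncomm_ring) B * h * B - D.ops.BA * a * A * B
      - D.ops.BB * a * B * B - B * a * D.ops.BB
  obtain ⟨k, hk⟩ := D.ops.exists_im_of_even ((D.inv a).1 (D.split.ker₀ a ha)) hA hB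
  obtain ⟨l', -, k', hk', -, hl', e'⟩ := D.descend a (D.le₀ ha) 0 (k * (1 + δ)) (map_zero _)
    (by rw [zero_add, ← D.im_eq, hk])
  rw [hl' rfl, zero_add] at e'
  rw [← (D.P_L₀ ha).1, e', (D.P_im hk').1]

/-- If the odd part of `c ∈ L₁` vanishes, then `c` is the sum of an invariant element of `so` and an
element of `Δ(so)`, both killed by `P₁`. -/
lemma odd_inj (D : RecipeData δ A B q e Δ so L₀ L₁ LU P₀ P₁) {c} (hc : c ∈ L₁)
    (h : oddPart δ A B c = 0) : c = 0 := by
  rw [oddPart_apply] at h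
  have h1 : B * c * A = 0 := by
    linear_combination (norm := noncomm_ring) B * h * A - D.ops.BB * c * A * A
      - B * c * D.ops.AA - D.ops.BA * c * δ * B * A
  have h2 : A * c * δ * B = 0 := by
    linear_combination (norm := noncomm_ring) A * h * B - D.ops.AB * c * A * B
      - D.ops.AA * c * δ * B * B - A * c * δ * D.ops.BB
  obtain ⟨l, k, hl, hk⟩ := D.ops.exists_inv_add_im_of_odd
    ((D.quad c).1 (D.split.ker₁ c hc)) h1 h2
  obtain ⟨l', hl', k', hk', hl0, -, e'⟩ := D.descend c (D.le₁ hc) l (k * (1 + δ))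
    ((D.inv l).2 hl) (by rw [← D.im_eq, hk])
  rw [← (D.P_L₁ hc).2, e', map_add, (D.P_inv hl' hl0).1, (D.P_im hk').2, add_zero]

lemma add_eq_zero (D : RecipeData δ A B q e Δ so L₀ L₁ LU P₀ P₁) {a c : Module.End F V}
    (h : evenPart A B a + oddPart δ A B c = 0) :
    evenPart A B a = 0 ∧ oddPart δ A B c = 0 := by
  have hA : evenPart A B a = 0 := by
    rw [evenPart_apply, oddPart_apply] at *
    linear_combination (norm := noncomm_ring) A * h * A + B * h * B
      - D.ops.AA * a * A * A - A * a * D.ops.AA - D.ops.AB * a * B * A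
      - D.ops.BA * a * A * B - D.ops.BB * a * B * B - B * a * D.ops.BB
      - D.ops.AB * c * A * A - A * A * c * δ * D.ops.BA
      - B * B * c * D.ops.AB - D.ops.BA * c * δ * B * B
  exact ⟨hA, by rwa [hA, zero_add] at h⟩

/-- The isomorphism onto `osp(W, nˢ)`: it applies `evenPart` to the component in `L₀` and
`oddPart` to the component in `L₁`. -/
def toOsp (δ A B : Module.End F V) (P₀ P₁ : Module.End F V →ₗ[F] Module.End F V) :
    Module.End F V →ₗ[F] Module.End F V :=
  evenPart A B ∘ₗ P₀ + oddPart δ A B ∘ₗ P₁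

lemma toOsp_L₀ (D : RecipeData δ A B q e Δ so L₀ L₁ LU P₀ P₁) {a} (ha : a ∈ L₀) :
    toOsp δ A B P₀ P₁ a = evenPart A B a := by
  simp [toOsp, D.P_L₀ ha]

lemma toOsp_L₁ (D : RecipeData δ A B q e Δ so L₀ L₁ LU P₀ P₁) {c} (hc : c ∈ L₁) :
    toOsp δ A B P₀ P₁ c = oddPart δ A B c := by
  simp [toOsp, D.P_L₁ hc]

lemma toOsp_inj (D : RecipeData δ A B q e Δ so L₀ L₁ LU P₀ P₁) {f} (hf : f ∈ L₀ ⊔ L₁)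
    (h : toOsp δ A B P₀ P₁ f = 0) : f = 0 := by
  obtain ⟨a, ha, c, hc, rfl⟩ := Submodule.mem_sup.1 hf
  rw [map_add, D.toOsp_L₀ ha, D.toOsp_L₁ hc] at h
  obtain ⟨h0, h1⟩ := D.add_eq_zero h
  rw [D.even_inj ha h0, D.odd_inj hc h1, add_zero]

lemma toOsp_P₀ (D : RecipeData δ A B q e Δ so L₀ L₁ LU P₀ P₁) {f} (hf : f ∈ so)
    (h0 : Δ f = 0) : toOsp δ A B P₀ P₁ (P₀ f) = evenPart A B f := by
  rw [D.toOsp_L₀ (D.P_mem hf).1, (D.P_inv hf h0).2]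

lemma toOsp_P₁ (D : RecipeData δ A B q e Δ so L₀ L₁ LU P₀ P₁) {f} (hf : f ∈ so)
    (h0 : Δ (Δ f) = 0) : toOsp δ A B P₀ P₁ (P₁ f) = oddPart δ A B f := by
  rw [D.toOsp_L₁ (D.P_mem hf).2, D.P_quad hf h0]

lemma toOsp_even_even (D : RecipeData δ A B q e Δ so L₀ L₁ LU P₀ P₁) {f g}
    (hf : f ∈ L₀) (hg : g ∈ L₀) :
    toOsp δ A B P₀ P₁ (P₀ (f * g - g * f)) =
      evenPart A B f * evenPart A B g - evenPart A B g * evenPart A B f := by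
  have f0 := (D.inv f).1 (D.split.ker₀ f hf)
  have g0 := (D.inv g).1 (D.split.ker₀ g hg)
  rw [D.toOsp_P₀ (D.so_comm f (D.le₀ hf) g (D.le₀ hg)) ((D.inv _).2 (by
    linear_combination (norm := noncomm_ring) f0 * g + f * g0 - g0 * f - g * f0))]
  rw [map_sub]
  simp only [evenPart_apply]
  rw [D.ops.even_even f0 g0, D.ops.even_even g0 f0]

lemma toOsp_even_odd (D : RecipeData δ A B q e Δ so L₀ L₁ LU P₀ P₁) {f g}
    (hf : f ∈ L₀) (hg : g ∈ L₁) :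
    toOsp δ A B P₀ P₁ (P₁ (f * g - g * f)) =
      evenPart A B f * oddPart δ A B g - oddPart δ A B g * evenPart A B f := by
  have f0 := (D.inv f).1 (D.split.ker₀ f hf)
  have g0 := (D.quad g).1 (D.split.ker₁ g hg)
  rw [D.toOsp_P₁ (D.so_comm f (D.le₀ hf) g (D.le₁ hg)) ((D.quad _).2 (by
    linear_combination (norm := noncomm_ring) f * g0 - g0 * f + δ * f0 * g + f0 * δ * g
      + f0 * g * δ + δ * g * f0 + g * δ * f0 + g * f0 * δ))]
  rw [map_sub]
  simp only [evenPart_apply, oddPart_apply]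
  rw [D.ops.even_odd f0 g0, D.ops.odd_even f0 g0]

/-- Modulo `Δ(so)`, the bracket `[f, Δ g]` is the invariant element `[Δ f, g] - [f, Δ g]`: indeed
`Δ[f, g] = [Δ f, g] + [f, Δ g] + [Δ f, Δ g]`, `[Δ f, Δ g] = Δ[f, Δ g]` and `-2 = 1`. -/
lemma toOsp_odd_odd (D : RecipeData δ A B q e Δ so L₀ L₁ LU P₀ P₁) {f g}
    (hf : f ∈ L₁) (hg : g ∈ L₁) :
    toOsp δ A B P₀ P₁ (P₀ (f * Δ g - Δ g * f)) =
      oddPart δ A B f * oddPart δ A B g + oddPart δ A B g * oddPart δ A B f := by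
  have f0 := (D.quad f).1 (D.split.ker₁ f hf)
  have g0 := (D.quad g).1 (D.split.ker₁ g hg)
  have sf := D.le₁ hf
  have sg := D.le₁ hg
  have f1 := (D.inv (Δ f)).1 (D.split.ker₁ f hf)
  have g1 := (D.inv (Δ g)).1 (D.split.ker₁ g hg)
  have h3 := D.ops.three
  have hd := D.ops.ddd
  -- `Δ` is a twisted derivation
  have tw : ∀ x y, Δ (x * y) = Δ x * y + x * Δ y + Δ x * Δ y := by
    intro x y
    have hx := conj_sub h3 hd x
    have hy := conj_sub h3 hd y
    have hxy := conj_sub h3 hd (x * y)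
    rw [← D.Δ_apply] at hx hy hxy
    rw [← hx, ← hy, ← hxy]
    linear_combination (norm := noncomm_ring) -((1 + δ) * x * hd * y * (1 + δ) * (1 + δ))
      - (1 + δ) * x * h3 * (δ + δ * δ) * y * (1 + δ) * (1 + δ)
  have cs : Δ f * g - g * Δ f - f * Δ g + Δ g * f ∈ so := by
    have := add_mem (D.so_comm _ (D.so_Δ f sf) g sg) (D.so_comm _ (D.so_Δ g sg) f sf)
    convert this using 1
    abel
  have c0 : Δ (Δ f * g - g * Δ f - f * Δ g + Δ g * f) = 0 := by
    simp only [map_add, map_sub, tw, D.split.ker₁ f hf, D.split.ker₁ g hg]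
    noncomm_ring
  have key : f * Δ g - Δ g * f = (Δ f * g - g * Δ f - f * Δ g + Δ g * f)
      + Δ ((f * Δ g - Δ g * f) - (f * g - g * f)) := by
    simp only [map_sub, tw, D.split.ker₁ g hg]
    linear_combination (norm := noncomm_ring) h3 * (f * Δ g - Δ g * f)
  rw [key, map_add, (D.P_im (sub_mem (D.so_comm f sf _ (D.so_Δ g sg))
    (D.so_comm f sf g sg))).1, add_zero, D.toOsp_P₀ cs c0]
  simp only [evenPart_apply, oddPart_apply]
  exact D.ops.odd_odd f0 g0 (D.Δ_apply f) (D.Δ_apply g)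

end RecipeData

end Recipe

/-! ### Adjoints, and surjectivity onto `osp(W, nˢ)` -/

section Orthogonal

variable {F V : Type*} [Field F] [AddCommGroup V] [Module F V]

/-- `so` is the orthogonal Lie algebra of the symmetric nondegenerate form `b`, the isometry `σ`
of `b` has cube the identity, and `Δ` is conjugation by `σ` minus the identity. -/
structure OrthData (b : V →ₗ[F] V →ₗ[F] F) (σ : Module.End F V)
    (Δ : Module.End F V →ₗ[F] Module.End F V) (so : Submodule F (Module.End F V)) : Prop where
  symm : ∀ x y, b x y = b y x
  nondeg : ∀ x, (∀ y, b x y = 0) → x = 0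
  cube : ∀ x, σ (σ (σ x)) = x
  isom : ∀ x y, b (σ x) (σ y) = b x y
  Δ_apply : ∀ f x, Δ f x = σ (f (σ (σ x))) - f x
  mem_so : ∀ f : Module.End F V, f ∈ so ↔ ∀ x y, b (f x) y + b x (f y) = 0

/-- `g` is adjoint to `f` with respect to `b`. -/
def IsAdj (b : V →ₗ[F] V →ₗ[F] F) (f g : Module.End F V) : Prop := ∀ x y, b (f x) y = b x (g y)

namespace OrthData

variable {b : V →ₗ[F] V →ₗ[F] F} {σ : Module.End F V}
  {Δ : Module.End F V →ₗ[F] Module.End F V} {so : Submodule F (Module.End F V)}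
  {f g f' g' : Module.End F V}

lemma exists_adj [FiniteDimensional F V] (O : OrthData b σ Δ so) (f : Module.End F V) :
    ∃ g, IsAdj b g f := by
  have hb : LinearMap.BilinForm.Nondegenerate (b : LinearMap.BilinForm F V) :=
    ⟨fun x hx => O.nondeg x hx, fun x hx => O.nondeg x fun y => by rw [O.symm]; exact hx y⟩
  exact ⟨_, LinearMap.BilinForm.isAdjointPairLeftAdjointOfNondegenerate b hb f⟩

lemma adj_symm (O : OrthData b σ Δ so) (h : IsAdj b f g) : IsAdj b g f := fun x y => by
  rw [O.symm, ← h, O.symm]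

lemma adj_unique (O : OrthData b σ Δ so) (h : IsAdj b f g) (h' : IsAdj b f g') : g = g' := by
  ext y
  rw [← sub_eq_zero]
  apply O.nondeg
  intro x
  rw [O.symm, map_sub, ← h, ← h', sub_self]

lemma adj_Δ (O : OrthData b σ Δ so) (h : IsAdj b f g) : IsAdj b (Δ f) (Δ g) := fun x y => by
  have h1 : ∀ u w, b (σ u) w = b u (σ (σ w)) := fun u w => by
    rw [← O.isom u, O.cube]
  rw [O.Δ_apply, O.Δ_apply, map_sub, map_sub, LinearMap.sub_apply, h1, h, h1, h1, O.cube, h]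

lemma adj_sub (h : IsAdj b f g) (h' : IsAdj b f' g') : IsAdj b (f - f') (g - g') := fun x y => by
  simp [h x y, h' x y]

lemma adj_add (h : IsAdj b f g) (h' : IsAdj b f' g') : IsAdj b (f + f') (g + g') := fun x y => by
  simp [h x y, h' x y]

lemma adj_zero : IsAdj b 0 0 := fun x y => by simp

lemma mem_iff (O : OrthData b σ Δ so) : f ∈ so ↔ IsAdj b f (-f) := by
  rw [O.mem_so]
  refine forall_congr' fun x => forall_congr' fun y => ?_
  rw [LinearMap.neg_apply, map_neg, eq_neg_iff_add_eq_zero]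

lemma sub_mem_so (O : OrthData b σ Δ so) (h : IsAdj b g f) : g - f ∈ so :=
  O.mem_iff.2 <| by
    rw [neg_sub]
    exact adj_sub h (O.adj_symm h)

lemma so_Δ (O : OrthData b σ Δ so) (hf : f ∈ so) : Δ f ∈ so := by
  rw [O.mem_iff] at *
  simpa using O.adj_Δ hf

lemma so_comm (O : OrthData b σ Δ so) (hf : f ∈ so) (hg : g ∈ so) : f * g - g * f ∈ so := by
  rw [O.mem_iff] at *
  intro x y
  simp only [LinearMap.sub_apply, Module.End.mul_apply, LinearMap.neg_apply, map_sub, map_neg]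
  rw [hf, hg, hg, hf]
  simp

lemma Δ_eq_zero (O : OrthData b σ Δ so) (h : IsAdj b g f) (hf : Δ f = 0) : Δ g = 0 := by
  have h1 := O.adj_Δ (O.adj_symm h)
  rw [hf] at h1
  exact O.adj_unique h1 adj_zero

/-- If `f = l + Δ k` lies in `so`, then so do the terms of `f = (l* - l) + Δ (k* - k)`, where
`*` is the adjoint; here `f* = -f` and `-2 = 1`. -/
lemma descend [CharP F 3] [FiniteDimensional F V] (O : OrthData b σ Δ so) (hf : f ∈ so)
    {l k : Module.End F V} (hl : Δ l = 0) (h : f = l + Δ k) :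
    ∃ l' ∈ so, ∃ k' ∈ so, Δ l' = 0 ∧ (l = 0 → l' = 0) ∧ f = l' + Δ k' := by
  obtain ⟨l₁, hl₁⟩ := O.exists_adj l
  obtain ⟨k₁, hk₁⟩ := O.exists_adj k
  refine ⟨l₁ - l, O.sub_mem_so hl₁, k₁ - k, O.sub_mem_so hk₁, ?_, ?_, ?_⟩
  · rw [map_sub, O.Δ_eq_zero hl₁ hl, hl, sub_self]
  · rintro rfl
    rw [sub_zero]
    exact O.adj_unique (O.adj_symm hl₁) adj_zero
  · have h1 : IsAdj b (l₁ + Δ k₁) f := h ▸ adj_add hl₁ (O.adj_Δ hk₁)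
    have h2 : l₁ + Δ k₁ = -f := O.adj_unique (O.adj_symm h1) (O.mem_iff.1 hf)
    have h3 : (3 : F) • f = 0 := by
      rw [show (3 : F) = 0 by exact_mod_cast CharP.cast_eq_zero F 3, zero_smul]
    have h4 : f + f + f = 0 := by
      rw [← h3]; module
    rw [map_sub]
    have : l₁ - l + (Δ k₁ - Δ k) = (l₁ + Δ k₁) - (l + Δ k) := by abel
    rw [this, h2, ← h, ← sub_eq_zero, ← h4]
    abel

/-! The elements of `osp(W, nˢ)` come from `so`: lift `T` to an operator `f` on `V`; then
`f* - f` lies in `so` and lifts `-T - T = T`. -/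

variable {δ A B q e : Module.End F V} {L₀ L₁ LU : Submodule F (Module.End F V)}
  {P₀ P₁ : Module.End F V →ₗ[F] Module.End F V} {ns : V → V → F}

lemma exists_even [FiniteDimensional F V] (O : OrthData b σ Δ so)
    (D : RecipeData δ A B q e Δ so L₀ L₁ LU P₀ P₁)
    (hδb : ∀ x y, b (δ x) y = b x (δ (δ y)) - b x (δ y))
    (hns : ∀ x y, ns x y = b (A x) (A y) + b (B x) (δ (B y)))
    {T : Module.End F V} (hT : T = A * T * A + B * T * B)
    (hT' : ∀ x y, ns (T x) y + ns x (T y) = 0) : ∃ a ∈ L₀, evenPart A B a = T := by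
  obtain ⟨hf, hfT⟩ := D.ops.lift_even hT
  generalize T + δ * T * q = f at hf hfT
  obtain ⟨g, hg⟩ := O.exists_adj f
  have f0 := (D.inv f).2 hf
  have g0 := O.Δ_eq_zero hg f0
  have hgT : evenPart A B g + T = 0 := by
    have hAB : evenPart A B g + T = A * (evenPart A B g + T) + B * (evenPart A B g + T) := by
      rw [evenPart_apply]
      linear_combination (norm := noncomm_ring) hT - D.ops.AA * g * A - D.ops.AB * g * B
        - D.ops.BA * g * A - D.ops.BB * g * B - A * hT - B * hT - D.ops.AA * T * A
        - D.ops.AB * T * B - D.ops.BA * T * A - D.ops.BB * T * B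
    ext x
    have h1 : ∀ y, ns ((evenPart A B g + T) x) y = 0 := by
      intro y
      have h2 := D.ops.even_adj O.symm hδb hns hg ((D.inv g).1 g0) hf x y
      rw [← evenPart_apply, hfT] at h2
      have h3 : ns ((evenPart A B g + T) x) y = ns (evenPart A B g x) y + ns (T x) y := by
        simp only [hns, LinearMap.add_apply, map_add]
        ring
      rw [h3, h2, add_comm, hT']
    obtain ⟨h2, h3⟩ := D.ops.nondeg O.symm O.nondeg O.exists_adj hδb fun y => by
      rw [← hns]; exact h1 y
    rw [hAB, LinearMap.add_apply, Module.End.mul_apply, Module.End.mul_apply, h2, h3]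
    simp
  have hk : g - f ∈ so := O.sub_mem_so hg
  refine ⟨P₀ (g - f), (D.P_mem hk).1, ?_⟩
  rw [(D.P_inv hk (by rw [map_sub, f0, g0, sub_self])).2, map_sub, evenPart_apply A B f, hfT]
  linear_combination (norm := noncomm_ring) hgT - D.ops.three * T

lemma exists_odd [FiniteDimensional F V] (O : OrthData b σ Δ so)
    (D : RecipeData δ A B q e Δ so L₀ L₁ LU P₀ P₁)
    (hδb : ∀ x y, b (δ x) y = b x (δ (δ y)) - b x (δ y))
    (hns : ∀ x y, ns x y = b (A x) (A y) + b (B x) (δ (B y)))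
    {T : Module.End F V} (hT : T = B * T * A + A * T * B)
    (hTA : ∀ x y, ns (T (A x)) y + ns (A x) (T y) = 0)
    (hTB : ∀ x y, ns (T (B x)) y - ns (B x) (T y) = 0) : ∃ c ∈ L₁, oddPart δ A B c = T := by
  obtain ⟨hf, hfT⟩ := D.ops.lift_odd hT
  generalize T * A + T * q = f at hf hfT
  obtain ⟨g, hg⟩ := O.exists_adj f
  have f0 := (D.quad f).2 hf
  have g0 := O.Δ_eq_zero (O.adj_Δ hg) f0
  have hgT : oddPart δ A B g + T = 0 := by
    obtain ⟨X, hX⟩ : ∃ X, X = oddPart δ A B g + T := ⟨_, rfl⟩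
    have hXl : X = A * X + B * X := by
      rw [hX, oddPart_apply]
      linear_combination (norm := noncomm_ring) hT - D.ops.AB * g * A - D.ops.AA * g * δ * B
        - D.ops.BB * g * A - D.ops.BA * g * δ * B - A * hT - B * hT - D.ops.AB * T * A
        - D.ops.AA * T * B - D.ops.BB * T * A - D.ops.BA * T * B
    have hXr : X = X * A + X * B := by
      rw [hX, oddPart_apply]
      linear_combination (norm := noncomm_ring) hT - B * g * D.ops.AA - A * g * δ * D.ops.BA
        - B * g * D.ops.AB - A * g * δ * D.ops.BB - hT * A - hT * B - B * T * D.ops.AA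
        - A * T * D.ops.BA - B * T * D.ops.AB - A * T * D.ops.BB
    have h1 : ∀ x, (∀ y, ns (X x) y = 0) → X x = 0 := by
      intro x hx
      obtain ⟨h2, h3⟩ := D.ops.nondeg O.symm O.nondeg O.exists_adj hδb fun y => by
        rw [← hns]; exact hx y
      rw [hXl, LinearMap.add_apply, Module.End.mul_apply, Module.End.mul_apply, h2, h3, add_zero]
    have h2 : ∀ x y, ns (X x) y = ns (oddPart δ A B g x) y + ns (T x) y := by
      intro x y
      simp only [hX, hns, LinearMap.add_apply, map_add]
      ring
    have h3 := fun x y => D.ops.odd_adj O.symm hδb hns hg ((D.quad g).1 g0) hf x y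
    rw [hfT, ← oddPart_apply] at h3
    rw [← hX]
    ext x
    rw [hXr, LinearMap.add_apply, Module.End.mul_apply, Module.End.mul_apply,
      h1 (A x) fun y => by rw [h2, (h3 x y).1, add_comm, hTA],
      h1 (B x) fun y => by rw [h2, (h3 x y).2, add_comm, ← sub_eq_add_neg, hTB]]
    simp
  have hk : g - f ∈ so := O.sub_mem_so hg
  refine ⟨P₁ (g - f), (D.P_mem hk).2, ?_⟩
  rw [D.P_quad hk (by rw [map_sub, map_sub, f0, g0, sub_self]), map_sub, oddPart_apply δ A B f,
    hfT]
  linear_combination (norm := noncomm_ring) hgT - D.ops.three * T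

end OrthData

end Orthogonal

/-! ### The isomorphism with `osp(W, nˢ)` -/

/-- Over a field of characteristic 3, let `(V, b)` be a finite-dimensional
vector space with a symmetric nondegenerate bilinear form preserved by `σ` with `σ³ = id`,
`δ = σ - id`, with a splitting `V = V₀ ⊕ V₁ ⊕ δ(V₁) ⊕ V₂`.  Define on the superspace
`W = V₀ ⊕ V₁` the form `nˢ` by `nˢ = b` on `V₀`, `nˢ(x,y) = b(x, δ y)` on `V₁`, zero
between the parts.  Then (a) `nˢ` is supersymmetric and nondegenerate; (b) the recipe
applied to the orthogonal Lie algebra `so(V,b)` (with the automorphism `Ad_σ` and any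
splitting of it) yields a Lie superalgebra isomorphic to the orthosymplectic Lie
superalgebra `osp(W, nˢ)`, realized as homogeneous endomorphisms of `V` supported on `W`. -/
theorem so_semisimplification_is_osp {F : Type*} [Field F] [CharP F 3]
    {V : Type*} [AddCommGroup V] [Module F V] [FiniteDimensional F V]
    (b : V →ₗ[F] V →ₗ[F] F)
    (hbsymm : ∀ x y : V, b x y = b y x)
    (hbnd : ∀ x : V, (∀ y : V, b x y = 0) → x = 0)
    (σ : V →ₗ[F] V) (hσ3 : σ ∘ₗ σ ∘ₗ σ = LinearMap.id)
    (hσb : ∀ x y : V, b (σ x) (σ y) = b x y)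
    (δ : V →ₗ[F] V) (hδ : ∀ x : V, δ x = σ x - x)
    -- splitting of V
    (V₀ V₁ U : Submodule F V)
    (h₀ : ∀ x ∈ V₀, δ x = 0)
    (h₁inj : ∀ x ∈ V₁, δ x = 0 → x = 0)
    (h₁ker : ∀ x ∈ V₁, δ (δ x) = 0)
    (hUinj : ∀ x ∈ U, δ (δ x) = 0 → x = 0)
    (hint : DirectSum.IsInternal ![V₀, V₁, V₁.map δ, U, U.map δ, U.map (δ ∘ₗ δ)])
    -- projections onto V₀ and V₁ along the splitting
    (p₀ p₁ : V →ₗ[F] V)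
    (hp₀ : ∀ x ∈ V₀, p₀ x = x)
    (hp₀0 : ∀ x ∈ V₁ ⊔ V₁.map δ ⊔ U ⊔ U.map δ ⊔ U.map (δ ∘ₗ δ), p₀ x = 0)
    (hp₁ : ∀ x ∈ V₁, p₁ x = x)
    (hp₁0 : ∀ x ∈ V₀ ⊔ V₁.map δ ⊔ U ⊔ U.map δ ⊔ U.map (δ ∘ₗ δ), p₁ x = 0)
    -- the super form nˢ
    (ns : V → V → F)
    (hns : ∀ x y : V, ns x y = b (p₀ x) (p₀ y) + b (p₁ x) (δ (p₁ y)))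
    -- the automorphism Ad_σ minus the identity, acting on endomorphisms
    (Δ : Module.End F V →ₗ[F] Module.End F V)
    (hΔ : ∀ (f : Module.End F V) (x : V), Δ f x = σ (f (σ (σ x))) - f x)
    -- the orthogonal Lie algebra so(V,b)
    (so : Submodule F (Module.End F V))
    (hso : ∀ f : Module.End F V, f ∈ so ↔ ∀ x y : V, b (f x) y + b x (f y) = 0) :
    -- (a) nˢ is supersymmetric and nondegenerate on W = V₀ ⊕ V₁
    ((∀ x ∈ V₀, ∀ y ∈ V₀, ns x y = ns y x) ∧
     (∀ x ∈ V₀, ∀ y ∈ V₁, ns x y = 0 ∧ ns y x = 0) ∧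
     (∀ x ∈ V₁, ∀ y ∈ V₁, ns x y = - ns y x) ∧
     (∀ x ∈ V₀ ⊔ V₁, (∀ y ∈ V₀ ⊔ V₁, ns x y = 0) → x = 0)) ∧
    -- (b) the recipe applied to so(V,b), for any splitting of it, gives osp(W, nˢ)
    (∀ L₀ L₁ LU : Submodule F (Module.End F V),
      L₀ ≤ so → L₁ ≤ so → LU ≤ so →
      (∀ f ∈ L₀, Δ f = 0) →
      (∀ f ∈ L₁, Δ f = 0 → f = 0) →
      (∀ f ∈ L₁, Δ (Δ f) = 0) →
      (∀ f ∈ LU, Δ (Δ f) = 0 → f = 0) →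
      iSupIndep ![L₀, L₁, L₁.map Δ, LU, LU.map Δ, LU.map (Δ ∘ₗ Δ)] →
      L₀ ⊔ L₁ ⊔ L₁.map Δ ⊔ LU ⊔ LU.map Δ ⊔ LU.map (Δ ∘ₗ Δ) = so →
      ∀ P₀ P₁ : Module.End F V →ₗ[F] Module.End F V,
        (∀ f ∈ L₀, P₀ f = f) →
        (∀ f ∈ L₁ ⊔ L₁.map Δ ⊔ LU ⊔ LU.map Δ ⊔ LU.map (Δ ∘ₗ Δ), P₀ f = 0) →
        (∀ f ∈ L₁, P₁ f = f) →
        (∀ f ∈ L₀ ⊔ L₁.map Δ ⊔ LU ⊔ LU.map Δ ⊔ LU.map (Δ ∘ₗ Δ), P₁ f = 0) →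
        ∀ br : Module.End F V → Module.End F V → Module.End F V,
          (∀ f g : Module.End F V, br f g =
            P₀ (P₀ f * P₀ g - P₀ g * P₀ f) +
            P₁ ((P₀ f * P₁ g - P₁ g * P₀ f) + (P₁ f * P₀ g - P₀ g * P₁ f)) +
            P₀ (P₁ f * Δ (P₁ g) - Δ (P₁ g) * P₁ f)) →
          ∃ Φ : Module.End F V →ₗ[F] Module.End F V,
            -- Φ carries the even part onto the even part of osp(W, nˢ)
            ⇑Φ '' (L₀ : Set (Module.End F V)) =
              {f : Module.End F V |
                (∀ x ∈ V₀, f x ∈ V₀) ∧ (∀ x ∈ V₁, f x ∈ V₁) ∧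
                (∀ x ∈ V₁.map δ ⊔ U ⊔ U.map δ ⊔ U.map (δ ∘ₗ δ), f x = 0) ∧
                (∀ x ∈ V₀ ⊔ V₁, ∀ y ∈ V₀ ⊔ V₁, ns (f x) y + ns x (f y) = 0)} ∧
            -- Φ carries the odd part onto the odd part of osp(W, nˢ)
            ⇑Φ '' (L₁ : Set (Module.End F V)) =
              {f : Module.End F V |
                (∀ x ∈ V₀, f x ∈ V₁) ∧ (∀ x ∈ V₁, f x ∈ V₀) ∧
                (∀ x ∈ V₁.map δ ⊔ U ⊔ U.map δ ⊔ U.map (δ ∘ₗ δ), f x = 0) ∧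
                (∀ x ∈ V₀, ∀ y ∈ V₀ ⊔ V₁, ns (f x) y + ns x (f y) = 0) ∧
                (∀ x ∈ V₁, ∀ y ∈ V₀ ⊔ V₁, ns (f x) y - ns x (f y) = 0)} ∧
            -- Φ is injective on L₀ ⊕ L₁
            (∀ f ∈ L₀ ⊔ L₁, Φ f = 0 → f = 0) ∧
            -- Φ transforms the recipe bracket into the super-commutator
            (∀ f ∈ L₀, ∀ g ∈ L₀, Φ (br f g) = Φ f * Φ g - Φ g * Φ f) ∧
            (∀ f ∈ L₀, ∀ g ∈ L₁, Φ (br f g) = Φ f * Φ g - Φ g * Φ f) ∧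
            (∀ f ∈ L₁, ∀ g ∈ L₀, Φ (br f g) = Φ f * Φ g - Φ g * Φ f) ∧
            (∀ f ∈ L₁, ∀ g ∈ L₁, Φ (br f g) = Φ f * Φ g + Φ g * Φ f)) := by
  have h3F : (3 : F) = 0 := by exact_mod_cast CharP.cast_eq_zero F 3
  have h3 : ∀ v : V, v + v + v = 0 := fun v => by
    rw [show v + v + v = (3 : F) • v by module, h3F, zero_smul]
  have hσ : ∀ x, σ (σ (σ x)) = x := fun x => LinearMap.congr_fun hσ3 x
  have hσ' : ∀ x, σ x = x + δ x := fun x => by rw [hδ]; abel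
  have hδ3 : ∀ x, δ (δ (δ x)) = 0 := fun x => by
    have h := h3 (σ x - σ (σ x))
    simp only [hδ, map_sub, hσ]
    rw [← h]
    abel
  have hδb : ∀ x y, b (δ x) y = b x (δ (δ y)) - b x (δ y) := fun x y => by
    have h1 : b (σ x) y = b x (σ (σ y)) := by rw [← hσb x, hσ]
    have h2 : δ (δ y) - δ y = σ (σ y) - y := by
      rw [← sub_eq_zero, ← neg_eq_zero, ← h3 (σ y - y)]
      simp only [hδ, map_sub]
      abel
    rw [hδ x, map_sub, LinearMap.sub_apply, h1, ← map_sub, ← map_sub, h2]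
  -- the splitting of `V` and the operators attached to it
  obtain ⟨hind, htop⟩ := (DirectSum.isInternal_submodule_iff_iSupIndep_and_iSup_eq_top _).1 hint
  have hsup : (⊤ : Submodule F V) ≤
      V₀ ⊔ V₁ ⊔ V₁.map δ ⊔ U ⊔ U.map δ ⊔ U.map (δ ∘ₗ δ) := by
    rw [← htop]
    refine iSup_le fun i => ?_
    have h := le_refl (V₀ ⊔ V₁ ⊔ V₁.map δ ⊔ U ⊔ U.map δ ⊔ U.map (δ ∘ₗ δ))
    simp only [sup_le_iff] at h
    obtain ⟨⟨⟨⟨⟨k0, k1⟩, k2⟩, k3⟩, k4⟩, k5⟩ := h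
    fin_cases i
    exacts [k0, k1, k2, k3, k4, k5]
  have hV : IsSplit δ ⊤ V₀ V₁ U := isSplit_of_iSupIndep δ ⊤ V₀ V₁ U h₀ h₁inj h₁ker hUinj
    (fun x _ => hδ3 x) hind hsup
  have pr₀ := proj_zero hp₀ hp₀0
  have pr₁ := proj_one hp₁ hp₁0
  obtain ⟨q, e, S, -⟩ := hV.exists_splitOps pr₀ pr₁
  have m₀ : ∀ x, p₀ x ∈ V₀ := fun x => by
    obtain ⟨a, ha, c, hc, y, hy, u, hu, v, hv, w, hw, rfl⟩ := hV.ex x trivial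
    rwa [pr₀ a ha c hc y hy u hu v hv w hw]
  have m₁ : ∀ x, p₁ x ∈ V₁ := fun x => by
    obtain ⟨a, ha, c, hc, y, hy, u, hu, v, hv, w, hw, rfl⟩ := hV.ex x trivial
    rwa [pr₁ a ha c hc y hy u hu v hv w hw]
  have k₀ : ∀ x ∈ V₁, p₀ x = 0 := (forall_mem_sup_eq_zero hp₀0).1
  have k₁ : ∀ x ∈ V₀, p₁ x = 0 := (forall_mem_sup_eq_zero hp₁0).1
  have hrest : ∀ {N : Submodule F V}, V₁.map δ ≤ N ⊔ V₁.map δ →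
      V₁.map δ ⊔ U ⊔ U.map δ ⊔ U.map (δ ∘ₗ δ) ≤
        N ⊔ V₁.map δ ⊔ U ⊔ U.map δ ⊔ U.map (δ ∘ₗ δ) := fun h =>
    sup_le_sup_right (sup_le_sup_right (sup_le_sup_right h _) _) _
  have r₀ : ∀ x ∈ V₁.map δ ⊔ U ⊔ U.map δ ⊔ U.map (δ ∘ₗ δ), p₀ x = 0 := fun x hx =>
    hp₀0 x (hrest le_sup_right hx)
  have r₁ : ∀ x ∈ V₁.map δ ⊔ U ⊔ U.map δ ⊔ U.map (δ ∘ₗ δ), p₁ x = 0 := fun x hx =>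
    hp₁0 x (hrest le_sup_right hx)
  have hW : ∀ x ∈ V₀ ⊔ V₁, x = p₀ x + p₁ x := fun x hx => by
    obtain ⟨a, ha, c, hc, rfl⟩ := Submodule.mem_sup.1 hx
    rw [map_add, map_add, hp₀ a ha, hp₁ c hc, k₀ c hc, k₁ a ha, add_zero, zero_add]
  have mW : ∀ x, p₀ x + p₁ x ∈ V₀ ⊔ V₁ := fun x =>
    add_mem (Submodule.mem_sup_left (m₀ x)) (Submodule.mem_sup_right (m₁ x))
  -- an operator vanishing on the complement of `V₀ ⊔ V₁` is determined by its values there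
  have hT : ∀ T : Module.End F V,
      (∀ x ∈ V₁.map δ ⊔ U ⊔ U.map δ ⊔ U.map (δ ∘ₗ δ), T x = 0) →
      ∀ x, T x = T (p₀ x) + T (p₁ x) := fun T h x => by
    obtain ⟨a, ha, c, hc, y, hy, u, hu, v, hv, w, hw, rfl⟩ := hV.ex x trivial
    rw [pr₀ a ha c hc y hy u hu v hv w hw, pr₁ a ha c hc y hy u hu v hv w hw]
    have e1 : a + c + δ y + u + δ v + δ (δ w) = a + c + (δ y + u + δ v + δ (δ w)) := by abel
    rw [e1, map_add, map_add, h (δ y + u + δ v + δ (δ w)), add_zero]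
    refine add_mem (Submodule.mem_sup_left (add_mem (Submodule.mem_sup_left
      (add_mem (Submodule.mem_sup_left ⟨y, hy, rfl⟩) (Submodule.mem_sup_right hu)))
      (Submodule.mem_sup_right ⟨v, hv, rfl⟩))) (Submodule.mem_sup_right ⟨w, hw, rfl⟩)
  have p00 : ∀ x, p₀ (p₀ x) = p₀ x := fun x => hp₀ _ (m₀ x)
  have p11 : ∀ x, p₁ (p₁ x) = p₁ x := fun x => hp₁ _ (m₁ x)
  have p01 : ∀ x, p₀ (p₁ x) = 0 := fun x => k₀ _ (m₁ x)
  have p10 : ∀ x, p₁ (p₀ x) = 0 := fun x => k₁ _ (m₀ x)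
  have nsl : ∀ x y, ns (p₀ x + p₁ x) y = ns x y := fun x y => by
    simp [hns, p00, p11, p01, p10]
  have nsr : ∀ x y, ns x (p₀ y + p₁ y) = ns x y := fun x y => by
    simp [hns, p00, p11, p01, p10]
  have nsneg : ∀ x y, ns x (-y) = - ns x y := fun x y => by
    simp only [hns, map_neg]; ring
  have O : OrthData b σ Δ so := ⟨hbsymm, hbnd, hσ, hσb, hΔ, hso⟩
  refine ⟨⟨?_, ?_, ?_, ?_⟩, ?_⟩
  · intro x hx y hy
    rw [hns, hns, k₁ x hx, k₁ y hy, hbsymm]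
  · intro x hx y hy
    rw [hns, hns, k₁ x hx, k₀ y hy]
    simp
  · intro x hx y hy
    rw [hns, hns, k₀ x hx, k₀ y hy, hp₁ x hx, hp₁ y hy, hbsymm y, hδb, h₁ker y hy]
    simp
  · intro x hx h
    obtain ⟨hA, hB⟩ := S.nondeg hbsymm hbnd O.exists_adj hδb (x := x) fun y => by
      rw [← hns, ← nsr]; exact h _ (mW y)
    rw [hW x hx, hA, hB, add_zero]
  · intro L₀ L₁ LU l₀ l₁ lU hL₀ hL₁inj hL₁ hLUinj hLind hLsup P₀ P₁ hP₀ hP₀0 hP₁ hP₁0 br hbr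
    have hΔ' : ∀ f, Δ f = (δ * f - f * δ) * (1 + 2 * δ + δ * δ) := fun f => by
      rw [← conj_sub S.three S.ddd]
      ext x
      simp [hΔ, hσ']
    have hΔ3 : ∀ f, Δ (Δ (Δ f)) = 0 := fun f => by
      ext x
      have h := h3 (σ (f (σ (σ x))) - σ (σ (f (σ x))))
      simp only [hΔ, map_sub, hσ, LinearMap.zero_apply]
      rw [← h]
      abel
    have D : RecipeData δ p₀ p₁ q e Δ so L₀ L₁ LU P₀ P₁ :=
      { ops := S
        Δ_apply := hΔ'
        so_Δ := fun f hf => O.so_Δ hf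
        so_comm := fun f hf g hg => O.so_comm hf hg
        descend := fun f hf l k hl h => O.descend hf hl h
        split := isSplit_of_iSupIndep Δ so L₀ L₁ LU hL₀ hL₁inj hL₁ hLUinj
          (fun f _ => hΔ3 f) hLind hLsup.ge
        le₀ := l₀
        le₁ := l₁
        leU := lU
        proj₀ := proj_zero hP₀ hP₀0
        proj₁ := proj_one hP₁ hP₁0 }
    have ev : ∀ f x, evenPart p₀ p₁ f x = p₀ (f (p₀ x)) + p₁ (f (p₁ x)) := fun f x => by
      rw [evenPart_apply]; rfl
    have od : ∀ f x, oddPart δ p₀ p₁ f x = p₁ (f (p₀ x)) + p₀ (f (δ (p₁ x))) := fun f x => by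
      rw [oddPart_apply]; rfl
    refine ⟨RecipeData.toOsp δ p₀ p₁ P₀ P₁, ?_, ?_, fun f hf => D.toOsp_inj hf, ?_, ?_, ?_, ?_⟩
    · apply Set.Subset.antisymm
      · rintro _ ⟨f, hf, rfl⟩
        rw [D.toOsp_L₀ hf]
        refine ⟨fun x hx => ?_, fun x hx => ?_, fun x hx => ?_, fun x _ y _ => ?_⟩
        · rw [ev, k₁ x hx, map_zero, map_zero, add_zero]
          exact m₀ _
        · rw [ev, k₀ x hx, map_zero, map_zero, zero_add]
          exact m₁ _
        · rw [ev, r₀ x hx, r₁ x hx]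
          simp
        · have f0 := (D.inv f).1 (hL₀ f hf)
          have h := S.even_adj hbsymm hδb hns (O.mem_iff.1 (l₀ hf)) f0
            (by rw [mul_neg, neg_mul, f0]) x y
          rw [← evenPart_apply, ← evenPart_apply, map_neg, LinearMap.neg_apply, nsneg] at h
          rw [h, neg_add_cancel]
      · rintro T ⟨t0, t1, t2, t3⟩
        have hT1 : T = p₀ * T * p₀ + p₁ * T * p₁ := by
          ext x
          simp only [LinearMap.add_apply, Module.End.mul_apply]
          rw [hp₀ _ (t0 _ (m₀ x)), hp₁ _ (t1 _ (m₁ x)), ← hT T t2]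
        have hT2 : ∀ x y, ns (T x) y + ns x (T y) = 0 := fun x y => by
          have h := t3 _ (mW x) _ (mW y)
          rwa [map_add, map_add, ← hT T t2, ← hT T t2, nsl, nsr] at h
        obtain ⟨a, ha, haT⟩ := O.exists_even D hδb hns hT1 hT2
        exact ⟨a, ha, by rw [D.toOsp_L₀ ha, haT]⟩
    · apply Set.Subset.antisymm
      · rintro _ ⟨f, hf, rfl⟩
        rw [D.toOsp_L₁ hf]
        have f0 := (D.quad f).1 (hL₁ f hf)
        have h := S.odd_adj hbsymm hδb hns (O.mem_iff.1 (l₁ hf)) f0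
          (by linear_combination (norm := noncomm_ring) -f0)
        rw [← oddPart_apply, ← oddPart_apply, map_neg] at h
        simp only [LinearMap.neg_apply, nsneg] at h
        refine ⟨fun x hx => ?_, fun x hx => ?_, fun x hx => ?_, fun x hx y _ => ?_,
          fun x hx y _ => ?_⟩
        · rw [od, k₁ x hx, map_zero, map_zero, map_zero, add_zero]
          exact m₁ _
        · rw [od, k₀ x hx, map_zero, map_zero, zero_add]
          exact m₀ _
        · rw [od, r₀ x hx, r₁ x hx]
          simp
        · have h1 := (h x y).1
          rw [hp₀ x hx] at h1
          rw [h1, neg_add_cancel]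
        · have h1 := (h x y).2
          rw [hp₁ x hx, neg_neg] at h1
          rw [h1, sub_self]
      · rintro T ⟨t0, t1, t2, t3, t4⟩
        have hT1 : T = p₁ * T * p₀ + p₀ * T * p₁ := by
          ext x
          simp only [LinearMap.add_apply, Module.End.mul_apply]
          rw [hp₁ _ (t0 _ (m₀ x)), hp₀ _ (t1 _ (m₁ x)), ← hT T t2]
        have hTA : ∀ x y, ns (T (p₀ x)) y + ns (p₀ x) (T y) = 0 := fun x y => by
          have h := t3 _ (m₀ x) _ (mW y)
          rwa [map_add, ← hT T t2, nsr] at h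
        have hTB : ∀ x y, ns (T (p₁ x)) y - ns (p₁ x) (T y) = 0 := fun x y => by
          have h := t4 _ (m₁ x) _ (mW y)
          rwa [map_add, ← hT T t2, nsr] at h
        obtain ⟨c, hc, hcT⟩ := O.exists_odd D hδb hns hT1 hTA hTB
        exact ⟨c, hc, by rw [D.toOsp_L₁ hc, hcT]⟩
    · intro f hf g hg
      rw [D.toOsp_L₀ hf, D.toOsp_L₀ hg, ← D.toOsp_even_even hf hg, hbr, (D.P_L₀ hf).1,
        (D.P_L₀ hf).2, (D.P_L₀ hg).1, (D.P_L₀ hg).2]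
      simp
    · intro f hf g hg
      rw [D.toOsp_L₀ hf, D.toOsp_L₁ hg, ← D.toOsp_even_odd hf hg, hbr, (D.P_L₀ hf).1,
        (D.P_L₀ hf).2, (D.P_L₁ hg).1, (D.P_L₁ hg).2]
      simp
    · intro f hf g hg
      rw [D.toOsp_L₁ hf, D.toOsp_L₀ hg, ← neg_sub, ← D.toOsp_even_odd hg hf, hbr,
        (D.P_L₁ hf).1, (D.P_L₁ hf).2, (D.P_L₀ hg).1, (D.P_L₀ hg).2]
      simp
    · intro f hf g hg
      rw [D.toOsp_L₁ hf, D.toOsp_L₁ hg, ← D.toOsp_odd_odd hf hg, hbr, (D.P_L₁ hf).1,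
        (D.P_L₁ hf).2, (D.P_L₁ hg).1, (D.P_L₁ hg).2]
      simp
end
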